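/- arXiv:2302.00532 — 4 statements merged into one kernel-verified Lean document; each statement's English description precedes it below -/
import Mathlib

section
/- Let 0<q<1 and 0<α<1. Then for every real z with 0<z<(1−q)^{−α}, one has 1/(1+Γ_q(1−α)·z) ≤ e_{α,1}(−z;q). -/
open scoped BigOperators

/-- The infinite q-Pochhammer symbol `(a;q)_∞ = ∏_{j=0}^∞ (1 - q^j a)`. -/
noncomputable def qPochInf (q a : ℝ) : ℝ := ∏' j : ℕ, (1 - q ^ j * a)

/-- The q-gamma function `Γ_q(x) = ((q;q)_∞/(q^x;q)_∞)·(1-q)^{1-x}`. -/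
noncomputable def qGamma (q x : ℝ) : ℝ :=
  (qPochInf q q / qPochInf q (q ^ x)) * (1 - q) ^ (1 - x)

/-- The q-Mittag-Leffler function `e_{α,β}(z;q) = ∑_{k=0}^∞ z^k/Γ_q(αk+β)`. -/
noncomputable def qML (q α β z : ℝ) : ℝ := ∑' k : ℕ, z ^ k / qGamma q (α * k + β)

open Filter Topology Finset

lemma qh_tendsto (d : ℕ → ℝ) (x t : ℝ) (ht0 : 0 ≤ t) (ht1 : t < 1)
    (hs : Summable fun n => |d n * x ^ n|) :
    Tendsto (fun m : ℕ => ∑' n, d n * (x * t ^ m) ^ n) atTop (𝓝 (d 0)) := by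
  have h0 : ∑' n, (if n = 0 then d 0 else 0) = d 0 := by
    rw [tsum_ite_eq]
  rw [← h0]
  refine tendsto_tsum_of_dominated_convergence (bound := fun n => |d n * x ^ n|) hs ?_ ?_
  · intro n
    rcases Nat.eq_zero_or_pos n with rfl | hn
    · simp
    · have h1 : Tendsto (fun m : ℕ => t ^ m) atTop (𝓝 0) :=
        tendsto_pow_atTop_nhds_zero_of_lt_one ht0 ht1
      have h2 := ((h1.const_mul x).pow n).const_mul (d n)
      simpa [hn.ne'] using h2
  · refine Eventually.of_forall fun m n => ?_
    rw [Real.norm_eq_abs, mul_pow, ← mul_assoc, abs_mul (d n * x ^ n)]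
    have h1 : |(t ^ m) ^ n| ≤ 1 := by
      rw [abs_of_nonneg (by positivity)]
      exact pow_le_one₀ (by positivity) (pow_le_one₀ ht0 ht1.le)
    exact mul_le_of_le_one_right (abs_nonneg _) h1

lemma qh_sum (c : ℕ → ℝ) (M x : ℝ) (hc : ∀ k, 0 < c k) (hM : ∀ k, c k ≤ M)
    (hx0 : 0 ≤ x) (hx1 : x < 1) : Summable fun n => |c n * (-x) ^ n| := by
  refine Summable.of_nonneg_of_le (fun _ => abs_nonneg _) (fun n => ?_)
    ((summable_geometric_of_lt_one hx0 hx1).mul_left M)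
  rw [abs_mul, abs_pow, abs_neg, abs_of_nonneg hx0, abs_of_pos (hc n)]
  exact mul_le_mul_of_nonneg_right (hM n) (by positivity)

lemma qh_ident (c B : ℕ → ℝ) (M p : ℝ) (hc : ∀ k, 0 < c k) (hM : ∀ k, c k ≤ M) (hc0 : c 0 = 1)
    (hp0 : 0 < p) (hp1 : p < 1) (hB : Summable fun n => |B n|)
    (hck : ∀ k, HasSum (fun n => B n * (p ^ n) ^ (k + 1)) (c k / c (k + 1)))
    (x : ℝ) (hx0 : 0 < x) (hx1 : x < 1) :
    ∑' n, B n * ((∑' k, c k * (-(x * p ^ n)) ^ k) - 1) = -x * ∑' k, c k * (-x) ^ k := by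
  have hpn : ∀ n : ℕ, 0 < p ^ n ∧ p ^ n ≤ 1 := fun n => ⟨by positivity, pow_le_one₀ hp0.le hp1.le⟩
  have hin : ∀ n, (∑' k, c k * (-(x * p ^ n)) ^ k) - 1
      = ∑' k, c (k + 1) * (-(x * p ^ n)) ^ (k + 1) := by
    intro n
    have hs := (qh_sum c M (x * p ^ n) hc hM (by have := hpn n; nlinarith)
      (by have := hpn n; nlinarith)).of_abs
    rw [hs.tsum_eq_zero_add]
    simp [hc0]
  have hM0 : 0 < M := (hc 0).trans_le (hM 0)
  have hS : Summable (Function.uncurry fun n k => B n * (c (k + 1) * (-(x * p ^ n)) ^ (k + 1))) := by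
    have h1 : Summable fun k : ℕ => M * x ^ (k + 1) :=
      (((summable_nat_add_iff 1).2 (summable_geometric_of_lt_one hx0.le hx1))).mul_left M
    have h2 := hB.mul_of_nonneg h1 (fun _ => abs_nonneg _) (fun k => by
      show 0 ≤ M * x ^ (k + 1)
      positivity)
    refine Summable.of_norm_bounded h2 ?_
    rintro ⟨n, k⟩
    simp only [Function.uncurry, Real.norm_eq_abs, abs_mul, abs_pow, abs_neg]
    refine mul_le_mul_of_nonneg_left ?_ (abs_nonneg _)
    rw [abs_of_pos (hc _), abs_of_pos hx0, abs_of_pos hp0]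
    refine mul_le_mul (hM _) ?_ (by positivity) hM0.le
    exact pow_le_pow_left₀ (by positivity) (by have := hpn n; nlinarith) _
  calc _ = ∑' n, ∑' k, B n * (c (k + 1) * (-(x * p ^ n)) ^ (k + 1)) := by
        refine tsum_congr fun n => ?_
        rw [hin, tsum_mul_left]
    _ = ∑' k, ∑' n, B n * (c (k + 1) * (-(x * p ^ n)) ^ (k + 1)) := hS.tsum_comm.symm
    _ = ∑' k, -x * (c k * (-x) ^ k) := by
        refine tsum_congr fun k => ?_
        have := ((hck k).mul_left (c (k + 1) * (-x) ^ (k + 1))).tsum_eq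
        rw [show -x * (c k * (-x) ^ k) = c (k + 1) * (-x) ^ (k + 1) * (c k / c (k + 1)) by
          have := (hc (k + 1)).ne'
          field_simp
          ring, ← this]
        refine tsum_congr fun n => ?_
        rw [← neg_mul, mul_pow]; ring
    _ = _ := tsum_mul_left

lemma qh_core (c B : ℕ → ℝ) (M p D : ℝ) (hc : ∀ k, 0 < c k) (hM : ∀ k, c k ≤ M) (hc0 : c 0 = 1)
    (hp0 : 0 < p) (hp1 : p < 1) (hB : Summable fun n => |B n|) (hB0 : B 0 = 1)
    (hBn : ∀ n, B (n + 1) ≤ 0) (hD : 0 < D) (hBD : HasSum B D)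
    (hck : ∀ k, HasSum (fun n => B n * (p ^ n) ^ (k + 1)) (c k / c (k + 1)))
    (w : ℝ) (hw0 : 0 < w) (hw1 : w < 1) :
    D ≤ (D + w) * ∑' k, c k * (-w) ^ k := by
  have hpn : ∀ n : ℕ, 0 < p ^ n ∧ p ^ n ≤ 1 := fun n => ⟨by positivity, pow_le_one₀ hp0.le hp1.le⟩
  obtain ⟨u, hu⟩ : ∃ u : ℕ → ℝ, ∀ m, u m = ∑' k, c k * (-(w * p ^ m)) ^ k := ⟨_, fun _ => rfl⟩
  have hwm : ∀ m : ℕ, 0 < w * p ^ m ∧ w * p ^ m < 1 := fun m => by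
    have := hpn m
    constructor <;> nlinarith
  have hu1 : Tendsto u atTop (𝓝 1) := by
    have := qh_tendsto c (-w) p hp0.le hp1 (qh_sum c M w hc hM hw0.le hw1)
    rw [hc0] at this
    refine this.congr fun m => ?_
    rw [hu]
    simp only [neg_mul]
  obtain ⟨g, hg⟩ : ∃ g : ℕ → ℝ, ∀ m, g m = ∑' k, c (k + 1) * (-(w * p ^ m)) ^ k := ⟨_, fun _ => rfl⟩
  have hg1 : Tendsto g atTop (𝓝 (c 1)) := by
    have := qh_tendsto (fun k => c (k + 1)) (-w) p hp0.le hp1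
      (qh_sum (fun k => c (k + 1)) M w (fun k => hc _) (fun k => hM _) hw0.le hw1)
    refine this.congr fun m => ?_
    rw [hg]
    simp only [neg_mul]
  have hug : ∀ m, u m = 1 - w * p ^ m * g m := by
    intro m
    have hs := (qh_sum c M (w * p ^ m) hc hM (hwm m).1.le (hwm m).2).of_abs
    rw [hu, hg, hs.tsum_eq_zero_add, hc0, ← tsum_mul_left, pow_zero, sub_eq_add_neg, ← tsum_neg, mul_one]
    congr 1
    refine tsum_congr fun k => ?_
    ring
  have hev : ∀ᶠ m in atTop, 0 < u m ∧ u m ≤ u (m + 1) := by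
    have h1 : ∀ᶠ m in atTop, 0 < u m := hu1.eventually_const_lt one_pos
    have h2 : Tendsto (fun m => g m - p * g (m + 1)) atTop (𝓝 (c 1 - p * c 1)) :=
      hg1.sub (((tendsto_add_atTop_iff_nat 1).2 hg1).const_mul p)
    have h3 : 0 < c 1 - p * c 1 := by have := hc 1; nlinarith
    filter_upwards [h1, h2.eventually_const_lt h3] with m h4 h5
    refine ⟨h4, ?_⟩
    rw [hug, hug (m + 1), pow_succ]
    have := mul_pos (hwm m).1 h5
    nlinarith
  have hBu : ∀ m, Summable fun n => B n * u (m + n) := by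
    intro m
    obtain ⟨K, hK⟩ := hu1.norm.bddAbove_range
    refine Summable.of_norm_bounded (hB.mul_right K) fun n => ?_
    rw [norm_mul]
    exact mul_le_mul_of_nonneg_left (hK ⟨m + n, rfl⟩) (abs_nonneg _)
  have hBu' : ∀ m, Summable fun n => B (n + 1) * u (m + 1 + n) := by
    intro m
    have := (summable_nat_add_iff 1).2 (hBu m)
    refine this.congr fun n => ?_
    rw [show m + (n + 1) = m + 1 + n by ring]
  have hrec : ∀ m, u m * (1 + w * p ^ m) = D - ∑' n, B (n + 1) * u (m + 1 + n) := by
    intro m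
    have h := qh_ident c B M p hc hM hc0 hp0 hp1 hB hck (w * p ^ m) (hwm m).1 (hwm m).2
    rw [← hu m] at h
    have h2 : ∀ n, B n * ((∑' k, c k * (-(w * p ^ m * p ^ n)) ^ k) - 1) = B n * u (m + n) - B n := by
      intro n
      rw [hu (m + n), pow_add, ← mul_assoc, mul_sub, mul_one]
    rw [tsum_congr h2, (hBu m).tsum_sub hBD.summable, hBD.tsum_eq, (hBu m).tsum_eq_zero_add, hB0] at h
    have h3 : ∑' n, B (n + 1) * u (m + (n + 1)) = ∑' n, B (n + 1) * u (m + 1 + n) :=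
      tsum_congr fun n => by rw [show m + (n + 1) = m + 1 + n by ring]
    rw [h3, add_zero] at h
    linarith
  have hstep : ∀ m, (∀ m', m < m' → 0 < u m' ∧ u m' ≤ u (m' + 1)) → 0 < u m ∧ u m ≤ u (m + 1) := by
    intro m hm
    have h1 := hrec m
    have h2 := hrec (m + 1)
    have h3 : ∑' n, B (n + 1) * u (m + 1 + n) ≤ 0 :=
      tsum_nonpos fun n => mul_nonpos_of_nonpos_of_nonneg (hBn n) (hm _ (by omega)).1.le
    have h4 : ∑' n, B (n + 1) * u (m + 1 + 1 + n) ≤ ∑' n, B (n + 1) * u (m + 1 + n) := by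
      refine (hBu' (m + 1)).tsum_le_tsum (fun n => ?_) (hBu' m)
      have := (hm (m + 1 + n) (by omega)).2
      rw [show m + 1 + n + 1 = m + 1 + 1 + n by ring] at this
      exact mul_le_mul_of_nonpos_left this (hBn n)
    have h5 := hwm m
    have h6 := hwm (m + 1)
    have h7 : 0 < u m := by
      by_contra! h
      nlinarith
    refine ⟨h7, ?_⟩
    have h8 : w * p ^ (m + 1) ≤ w * p ^ m := by
      rw [pow_succ]; nlinarith
    have h9 : u m * (1 + w * p ^ (m + 1)) ≤ u (m + 1) * (1 + w * p ^ (m + 1)) := by nlinarith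
    exact le_of_mul_le_mul_right h9 (by linarith)
  obtain ⟨N, hN⟩ := eventually_atTop.1 hev
  have hall : ∀ j m, N ≤ m + j → 0 < u m ∧ u m ≤ u (m + 1) := by
    intro j
    induction j with
    | zero => exact fun m h => hN m h
    | succ j ih => exact fun m h => hstep m fun m' h' => ih m' (by omega)
  have hmono : Monotone u := monotone_nat_of_le_succ fun m => (hall N m (by omega)).2
  have h1 := hrec 0
  have hBs : ∑' n, B (n + 1) = D - 1 := by
    have := hBD.summable.tsum_eq_zero_add
    rw [hBD.tsum_eq, hB0] at this
    linarith
  have h2 : ∑' n, B (n + 1) * u (0 + 1 + n) ≤ (D - 1) * u 0 := by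
    rw [← hBs, ← tsum_mul_right]
    refine (hBu' 0).tsum_le_tsum (fun n => ?_) (((summable_nat_add_iff 1).2 hBD.summable).mul_right _)
    exact mul_le_mul_of_nonpos_left (hmono (Nat.zero_le _)) (hBn n)
  have h3 : u 0 = ∑' k, c k * (-w) ^ k := by rw [hu]; simp
  rw [← h3]
  rw [pow_zero, mul_one] at h1
  linarith

lemma qh_poch (q a : ℝ) (hq0 : 0 < q) (hq1 : q < 1) (ha0 : 0 < a) (ha1 : a < 1) :
    Tendsto (fun N => ∏ j ∈ range N, (1 - q ^ j * a)) atTop (𝓝 (qPochInf q a))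
      ∧ 0 < qPochInf q a ∧ qPochInf q a ≤ 1 := by
  have hs : Summable fun j : ℕ => ‖-(q ^ j * a)‖ := by
    simp only [norm_neg]
    exact ((summable_geometric_of_lt_one hq0.le hq1).mul_right a).norm
  have hj : ∀ j : ℕ, 0 < 1 - q ^ j * a ∧ 1 - q ^ j * a ≤ 1 := by
    intro j
    have h1 : q ^ j ≤ 1 := pow_le_one₀ hq0.le hq1.le
    have h2 : 0 < q ^ j := by positivity
    constructor <;> nlinarith
  have hm := multipliable_one_add_of_summable hs
  have ht := hm.tendsto_prod_tprod_nat
  have hne := tprod_one_add_ne_zero_of_summable (f := fun j : ℕ => -(q ^ j * a))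
    (fun j => by have := (hj j).1; rw [← sub_eq_add_neg]; exact this.ne') hs
  simp only [← sub_eq_add_neg] at ht hne
  change Tendsto _ _ (𝓝 (qPochInf q a)) at ht
  change qPochInf q a ≠ 0 at hne
  refine ⟨ht, lt_of_le_of_ne ?_ hne.symm, ?_⟩
  · exact ge_of_tendsto' ht fun N => prod_nonneg fun j _ => (hj j).1.le
  · exact le_of_tendsto' ht fun N => prod_le_one (fun j _ => (hj j).1.le) fun j _ => (hj j).2

lemma qh_binom (q a : ℝ) (hq0 : 0 < q) (hq1 : q < 1) (ha0 : 0 < a) (b : ℕ → ℝ) (hb0 : b 0 = 1)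
    (hbn : ∀ n, b n ≠ 0) (hb : ∀ n, b (n + 1) * (1 - q ^ (n + 1)) = b n * (1 - a * q ^ n))
    (x : ℝ) (hx0 : 0 < x) (hx1 : x < 1) (hax : a * x < 1) :
    Summable (fun n => |b n * x ^ n|) ∧
    HasSum (fun n => b n * x ^ n) (qPochInf q (a * x) / qPochInf q x) := by
  have hS : ∀ y, 0 < y → y < 1 → Summable fun n => b n * y ^ n := by
    intro y hy0 hy1
    refine summable_of_ratio_test_tendsto_lt_one (l := y) hy1
      (Eventually.of_forall fun n => mul_ne_zero (hbn n) (by positivity)) ?_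
    have hq : Tendsto (fun n : ℕ => q ^ n) atTop (𝓝 0) :=
      tendsto_pow_atTop_nhds_zero_of_lt_one hq0.le hq1
    have h1 : Tendsto (fun n : ℕ => |(1 - a * q ^ n) / (1 - q ^ (n + 1))| * y) atTop (𝓝 (|(1 - a * 0) / (1 - 0)| * y)) := by
      refine Tendsto.mul_const _ (Tendsto.abs ?_)
      refine ((hq.const_mul a).const_sub 1).div (((tendsto_add_atTop_iff_nat 1).2 hq).const_sub 1) (by norm_num)
    simp only [mul_zero, sub_zero, div_one, abs_one, one_mul] at h1
    refine h1.congr fun n => ?_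
    have h2 : q ^ (n + 1) < 1 := pow_lt_one₀ hq0.le hq1 (by omega)
    have h3 : b (n + 1) = b n * ((1 - a * q ^ n) / (1 - q ^ (n + 1))) := by
      rw [mul_div_assoc', eq_div_iff (by linarith)]; exact hb n
    rw [h3]
    simp only [norm_mul, Real.norm_eq_abs, pow_succ, abs_of_pos hy0]
    have := abs_pos.2 (hbn n)
    have : 0 < |y ^ n| := abs_pos.2 (by positivity)
    field_simp
  refine ⟨(hS x hx0 hx1).abs, ?_⟩
  have hF : ∀ y, 0 < y → y < 1 →
      (1 - y) * ∑' n, b n * y ^ n = (1 - a * y) * ∑' n, b n * (q * y) ^ n := by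
    intro y hy0 hy1
    have s1 := hS y hy0 hy1
    have s2 := hS (q * y) (by positivity) (by nlinarith)
    have e1 : ∑' n, b n * y ^ n - ∑' n, b n * (q * y) ^ n
        = y * ∑' n, b n * y ^ n - a * y * ∑' n, b n * (q * y) ^ n := by
      rw [← s1.tsum_sub s2, (s1.sub s2).tsum_eq_zero_add, ← tsum_mul_left, ← tsum_mul_left,
        ← (s1.mul_left _).tsum_sub (s2.mul_left _)]
      simp only [pow_zero, sub_self, zero_add]
      refine tsum_congr fun n => ?_
      have := hb n
      rw [mul_pow, mul_pow]
      linear_combination y ^ (n + 1) * this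
    linarith
  have hqN : ∀ N : ℕ, 0 < q ^ N ∧ q ^ N ≤ 1 := fun N => ⟨by positivity, pow_le_one₀ hq0.le hq1.le⟩
  have hit : ∀ N, (∏ j ∈ range N, (1 - q ^ j * x)) * ∑' n, b n * x ^ n
      = (∏ j ∈ range N, (1 - q ^ j * (a * x))) * ∑' n, b n * (x * q ^ N) ^ n := by
    intro N
    induction N with
    | zero => simp
    | succ N ih =>
      have h := hF (x * q ^ N) (by have := hqN N; nlinarith) (by have := hqN N; nlinarith)
      rw [prod_range_succ, prod_range_succ, mul_right_comm, ih,
        show x * q ^ (N + 1) = q * (x * q ^ N) by ring]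
      linear_combination (∏ j ∈ range N, (1 - q ^ j * (a * x))) * h
  have t1 := (qh_poch q x hq0 hq1 hx0 hx1).1.mul_const (∑' n, b n * x ^ n)
  have t2 := (qh_poch q (a * x) hq0 hq1 (by positivity) hax).1.mul
    (qh_tendsto b x q hq0.le hq1 (hS x hx0 hx1).abs)
  have e := tendsto_nhds_unique (t1.congr hit) t2
  rw [hb0, mul_one] at e
  have hp := (qh_poch q x hq0 hq1 hx0 hx1).2.1
  rw [← e, mul_div_cancel_left₀ _ hp.ne']
  exact (hS x hx0 hx1).hasSum

theorem qML_lower_bound (q α : ℝ) (hq0 : 0 < q) (hq1 : q < 1)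
    (hα0 : 0 < α) (hα1 : α < 1) :
    ∀ z : ℝ, 0 < z → z < (1 - q) ^ (-α) →
      1 / (1 + qGamma q (1 - α) * z) ≤ qML q α 1 (-z) := by
  intro z hz0 hz1
  have h1q : 0 < 1 - q := by linarith
  have hr : 0 < (1 - q) ^ α := Real.rpow_pos_of_pos h1q _
  obtain ⟨w, hw⟩ : ∃ w, w = z * (1 - q) ^ α := ⟨_, rfl⟩
  have hw0 : 0 < w := by rw [hw]; positivity
  have hw1 : w < 1 := by
    rw [Real.rpow_neg h1q.le] at hz1
    rw [hw, ← lt_div_iff₀ hr, one_div]; exact hz1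
  have hx : ∀ s : ℝ, 0 < s → 0 < q ^ s ∧ q ^ s < 1 := fun s hs =>
    ⟨Real.rpow_pos_of_pos hq0 _, Real.rpow_lt_one hq0.le hq1 hs⟩
  have hP : ∀ s : ℝ, 0 < s → 0 < qPochInf q (q ^ s) ∧ qPochInf q (q ^ s) ≤ 1 := fun s hs =>
    (qh_poch q _ hq0 hq1 (hx s hs).1 (hx s hs).2).2
  have hPq := (qh_poch q _ hq0 hq1 hq0 hq1).2
  have hak : ∀ k : ℕ, 0 < α * k + 1 := fun k => by positivity
  obtain ⟨c, hc⟩ : ∃ c : ℕ → ℝ, ∀ k, c k = qPochInf q (q ^ (α * k + 1)) / qPochInf q q :=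
    ⟨_, fun _ => rfl⟩
  obtain ⟨b, hb⟩ : ∃ b : ℕ → ℝ, ∀ n, b n = ∏ j ∈ range n, (1 - q ^ (-α) * q ^ j) / (1 - q ^ (j + 1)) :=
    ⟨_, fun _ => rfl⟩
  have hqj : ∀ j : ℕ, 0 < 1 - q ^ (j + 1) := fun j => by
    have : q ^ (j + 1) < 1 := pow_lt_one₀ hq0.le hq1 (by omega)
    linarith
  have ha1 : 1 < q ^ (-α) := Real.one_lt_rpow_of_pos_of_lt_one_of_neg hq0 hq1 (by linarith)
  have hqs : ∀ j : ℕ, 0 < 1 - q ^ (-α) * q ^ (j + 1) := fun j => by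
    rw [← Real.rpow_natCast, ← Real.rpow_add hq0]
    have : (0 : ℝ) < -α + ((j + 1 : ℕ) : ℝ) := by
      push_cast
      have : (0 : ℝ) ≤ j := by positivity
      linarith
    have := (hx _ this).2
    linarith
  have hb0 : b 0 = 1 := by rw [hb]; simp
  have hbneg : ∀ n, b (n + 1) < 0 := by
    intro n
    rw [hb, prod_range_succ']
    refine mul_neg_of_pos_of_neg (prod_pos fun j _ => div_pos (hqs j) (hqj _)) ?_
    refine div_neg_of_neg_of_pos ?_ (hqj 0)
    rw [pow_zero]; linarith
  have hbn : ∀ n, b n ≠ 0 := by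
    intro n
    cases n with
    | zero => rw [hb0]; norm_num
    | succ n => exact (hbneg n).ne
  have hbrec : ∀ n, b (n + 1) * (1 - q ^ (n + 1)) = b n * (1 - q ^ (-α) * q ^ n) := by
    intro n
    rw [hb, hb n, prod_range_succ]
    have := (hqj n).ne'
    field_simp
  have hbin : ∀ k : ℕ, Summable (fun n => |b n * (q ^ (α * k + 1)) ^ n|) ∧
      HasSum (fun n => b n * (q ^ (α * k + 1)) ^ n)
        (qPochInf q (q ^ (α * k + 1 - α)) / qPochInf q (q ^ (α * k + 1))) := by
    intro k
    have e : q ^ (-α) * q ^ (α * k + 1) = q ^ (α * k + 1 - α) := by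
      rw [← Real.rpow_add hq0]; congr 1; ring
    have h := qh_binom q (q ^ (-α)) hq0 hq1 (by linarith) b hb0 hbn hbrec (q ^ (α * k + 1))
      (hx _ (hak k)).1 (hx _ (hak k)).2 (by
        rw [e]
        refine (hx _ ?_).2
        have : 0 ≤ α * k := by positivity
        linarith)
    rwa [e] at h
  have hb00 := hbin 0
  simp only [Nat.cast_zero, mul_zero, zero_add, Real.rpow_one] at hb00
  have hP1 := (hP (1 - α) (by linarith)).1
  have key := qh_core c (fun n => b n * q ^ n) (1 / qPochInf q q) (q ^ α)
    (qPochInf q (q ^ (1 - α)) / qPochInf q q)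
    (fun k => by rw [hc]; exact div_pos (hP _ (hak k)).1 hPq.1)
    (fun k => by rw [hc]; exact div_le_div_of_nonneg_right (hP _ (hak k)).2 hPq.1.le)
    (by rw [hc]; simp [hPq.1.ne']) (hx α hα0).1 (hx α hα0).2 hb00.1 (by simp [hb0])
    (fun n => mul_nonpos_of_nonpos_of_nonneg (hbneg n).le (by positivity))
    (div_pos hP1 hPq.1) hb00.2 (by
      intro k
      have h := (hbin (k + 1)).2
      have e1 : α * ((k + 1 : ℕ) : ℝ) + 1 - α = α * k + 1 := by push_cast; ring
      rw [e1] at h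
      rw [hc, hc, div_div_div_cancel_right₀ hPq.1.ne']
      convert h using 2 with n
      have e2 : q ^ (α * ((k + 1 : ℕ) : ℝ) + 1) = (q ^ α) ^ (k + 1) * q := by
        rw [Real.rpow_add hq0, Real.rpow_one, Real.rpow_mul hq0.le, Real.rpow_natCast]
      rw [e2, mul_pow, ← pow_mul, ← pow_mul, mul_comm n (k + 1)]
      ring) w hw0 hw1
  have hML : qML q α 1 (-z) = ∑' k, c k * (-w) ^ k := by
    unfold qML
    refine tsum_congr fun k => ?_
    have e3 : (1 - q) ^ (1 - (α * (k : ℝ) + 1)) = (((1 - q) ^ α) ^ k)⁻¹ := by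
      rw [show 1 - (α * (k : ℝ) + 1) = -(α * k) by ring, Real.rpow_neg h1q.le,
        Real.rpow_mul h1q.le, Real.rpow_natCast]
    rw [hc, qGamma, e3, hw, ← neg_mul, mul_pow]
    have h1 := (hP _ (hak k)).1.ne'
    have h2 := hPq.1.ne'
    field_simp
  have hG : qGamma q (1 - α) * z = w / (qPochInf q (q ^ (1 - α)) / qPochInf q q) := by
    rw [qGamma, hw, show 1 - (1 - α) = α by ring]
    have h2 := hPq.1.ne'
    have h3 := hP1.ne'
    field_simp
  rw [hML, hG]
  have hD : 0 < qPochInf q (q ^ (1 - α)) / qPochInf q q := div_pos hP1 hPq.1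
  generalize qPochInf q (q ^ (1 - α)) / qPochInf q q = D at key hD
  have e4 : 1 / (1 + w / D) = D / (D + w) := by field_simp
  rw [e4, div_le_iff₀ (by positivity), mul_comm]
  exact key
end

section
/- Let 0<q<1 and 0<α<1. Then for every real z with 0<z<(1−q)^{−α}, one has e_{α,1}(−z;q) ≤ 1/(1+Γ_q(α+1)^{−1}·z). -/
open scoped BigOperators

open Filter Topology

lemma qp_summable (q x : ℝ) (hq0 : 0 < q) (hq1 : q < 1) :
    Summable (fun j : ℕ => -(q ^ j * x)) :=
  ((summable_geometric_of_lt_one hq0.le hq1).mul_right x).neg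

lemma qp_tendsto (q x : ℝ) (hq0 : 0 < q) (hq1 : q < 1) :
    Tendsto (fun N => ∏ j ∈ Finset.range N, (1 - q ^ j * x)) atTop (𝓝 (qPochInf q x)) := by
  have h : Multipliable (fun j : ℕ => 1 + -(q ^ j * x)) :=
    multipliable_one_add_of_summable (qp_summable q x hq0 hq1).norm
  have := h.hasProd.tendsto_prod_nat
  simpa [qPochInf, sub_eq_add_neg] using this

lemma qp_fac (q x : ℝ) (hq0 : 0 < q) (hq1 : q < 1) (hx0 : 0 ≤ x) (hx1 : x < 1) (j : ℕ) :
    0 < 1 - q ^ j * x := by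
  have h1 : q ^ j ≤ 1 := pow_le_one₀ hq0.le hq1.le
  have : q ^ j * x ≤ 1 * x := mul_le_mul_of_nonneg_right h1 hx0
  linarith

lemma qp_pos (q x : ℝ) (hq0 : 0 < q) (hq1 : q < 1) (hx0 : 0 ≤ x) (hx1 : x < 1) :
    0 < qPochInf q x := by
  have h := Real.summable_log_one_add_of_summable (qp_summable q x hq0 hq1)
  have h2 := Real.rexp_tsum_eq_tprod (f := fun j : ℕ => 1 + -(q ^ j * x))
    (fun j => by have := qp_fac q x hq0 hq1 hx0 hx1 j; simpa [sub_eq_add_neg] using this) h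
  have h3 : qPochInf q x = ∏' j : ℕ, (1 + -(q ^ j * x)) := by
    simp [qPochInf, sub_eq_add_neg]
  rw [h3, ← h2]
  exact Real.exp_pos _

lemma qp_le_one (q x : ℝ) (hq0 : 0 < q) (hq1 : q < 1) (hx0 : 0 ≤ x) (hx1 : x < 1) :
    qPochInf q x ≤ 1 := by
  refine le_of_tendsto' (qp_tendsto q x hq0 hq1) (fun N => ?_)
  refine Finset.prod_le_one (fun j _ => (qp_fac q x hq0 hq1 hx0 hx1 j).le) (fun j _ => ?_)
  have : 0 ≤ q ^ j * x := by positivity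
  linarith

lemma qp_succ (q x : ℝ) (hq0 : 0 < q) (hq1 : q < 1) :
    qPochInf q x = (1 - x) * qPochInf q (q * x) := by
  have h1 := (qp_tendsto q x hq0 hq1).comp (tendsto_add_atTop_nat 1)
  have h2 := (qp_tendsto q (q * x) hq0 hq1).const_mul (1 - x)
  refine tendsto_nhds_unique h1 (h2.congr fun N => ?_)
  simp only [Function.comp]
  rw [Finset.prod_range_succ', mul_comm]
  simp [pow_succ, mul_assoc]

noncomputable def rr (q t : ℝ) (m : ℕ) : ℝ :=
  ∏ j ∈ Finset.range m, ((1 - t * q ^ j) / (1 - q ^ (j + 1)))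

section
variable {q t : ℝ}

lemma rr_succ (m : ℕ) (hq0 : 0 < q) (hq1 : q < 1) :
    rr q t (m + 1) * (1 - q ^ (m + 1)) = rr q t m * (1 - t * q ^ m) := by
  have : q ^ (m + 1) < 1 := pow_lt_one₀ hq0.le hq1 (by simp)
  have : 1 - q ^ (m + 1) ≠ 0 := by linarith
  rw [rr, Finset.prod_range_succ, ← rr]
  field_simp

lemma rr_pos (hq0 : 0 < q) (hq1 : q < 1) (hqt : q < t) (ht1 : t < 1) (m : ℕ) :
    0 < rr q t m := by
  refine Finset.prod_pos fun j _ => div_pos ?_ ?_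
  · have := qp_fac q t hq0 hq1 (hq0.trans hqt).le ht1 j
    linarith
  · have : q ^ (j + 1) < 1 := pow_lt_one₀ hq0.le hq1 (by simp)
    linarith

lemma rr_anti (hq0 : 0 < q) (hq1 : q < 1) (hqt : q < t) (ht1 : t < 1) (m : ℕ) :
    rr q t (m + 1) ≤ rr q t m := by
  have h0 := rr_pos hq0 hq1 hqt ht1 m
  have h1 : q ^ (m + 1) < 1 := pow_lt_one₀ hq0.le hq1 (by simp)
  have h2 := rr_succ (t := t) m hq0 hq1
  have h3 : 1 - t * q ^ m ≤ 1 - q ^ (m + 1) := by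
    have : q * q ^ m ≤ t * q ^ m := mul_le_mul_of_nonneg_right hqt.le (by positivity)
    rw [pow_succ]; linarith
  have h4 := mul_le_mul_of_nonneg_left h3 h0.le
  rw [← h2] at h4
  exact le_of_mul_le_mul_right h4 (by linarith)

lemma rr_le_one (hq0 : 0 < q) (hq1 : q < 1) (hqt : q < t) (ht1 : t < 1) (m : ℕ) :
    rr q t m ≤ 1 := by
  induction m with
  | zero => simp [rr]
  | succ m ih => exact (rr_anti hq0 hq1 hqt ht1 m).trans ih

end

/-- bounded coefficients give summability -/
lemma bsum {a : ℕ → ℝ} {C : ℝ} (ha : ∀ k, |a k| ≤ C) {x : ℝ} (hx : |x| < 1) :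
    Summable (fun k => a k * x ^ k) := by
  refine Summable.of_norm_bounded
    ((summable_geometric_of_lt_one (abs_nonneg x) hx).mul_left C) fun k => ?_
  rw [Real.norm_eq_abs, abs_mul, abs_pow]
  exact mul_le_mul_of_nonneg_right (ha k) (by positivity)

lemma bbound {a : ℕ → ℝ} {C : ℝ} (ha : ∀ k, |a k| ≤ C) {x : ℝ} (hx : |x| < 1) :
    |∑' k, a k * x ^ k| ≤ C * (1 - |x|)⁻¹ := by
  have := tsum_of_norm_bounded (f := fun k => a k * x ^ k)
    ((hasSum_geometric_of_lt_one (abs_nonneg x) hx).mul_left C) (fun k => by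
      rw [Real.norm_eq_abs, abs_mul, abs_pow]
      exact mul_le_mul_of_nonneg_right (ha k) (by positivity))
  simpa using this

lemma bshift {a : ℕ → ℝ} {C : ℝ} (ha : ∀ k, |a k| ≤ C) {x : ℝ} (hx : |x| < 1) :
    ∑' k, a k * x ^ k = a 0 + x * ∑' k, a (k + 1) * x ^ k := by
  rw [(bsum ha hx).tsum_eq_zero_add, ← tsum_mul_left]
  simp only [pow_zero, mul_one]
  congr 1
  exact tsum_congr fun k => by ring

lemma blim {a : ℕ → ℝ} {C : ℝ} (ha : ∀ k, |a k| ≤ C) {x : ℝ} (hx : |x| < 1) {s : ℝ}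
    (hs0 : 0 < s) (hs1 : s < 1) :
    Tendsto (fun N : ℕ => ∑' k, a k * (s ^ N * x) ^ k) atTop (𝓝 (a 0)) := by
  have hC : 0 ≤ C := (abs_nonneg _).trans (ha 0)
  have hb : ∀ N : ℕ, |s ^ N * x| ≤ |x| := fun N => by
    rw [abs_mul, abs_of_pos (by positivity : 0 < s ^ N)]
    exact mul_le_of_le_one_left (abs_nonneg x) (pow_le_one₀ hs0.le hs1.le)
  rw [tendsto_iff_dist_tendsto_zero]
  have h1 : Tendsto (fun N : ℕ => s ^ N * (|x| * (C * (1 - |x|)⁻¹))) atTop (𝓝 0) := by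
    simpa using (tendsto_pow_atTop_nhds_zero_of_lt_one hs0.le hs1).mul_const
      (|x| * (C * (1 - |x|)⁻¹))
  refine squeeze_zero (fun _ => dist_nonneg) (fun N => ?_) h1
  have hN := (hb N).trans_lt hx
  rw [bshift ha hN, Real.dist_eq, add_sub_cancel_left, abs_mul, abs_mul,
    abs_of_pos (by positivity : 0 < s ^ N), mul_assoc]
  have h2 := bbound (fun k => ha (k + 1)) hN
  have h3 : (1 - |s ^ N * x|)⁻¹ ≤ (1 - |x|)⁻¹ :=
    inv_anti₀ (by linarith) (by linarith [hb N])
  have h4 := h2.trans (mul_le_mul_of_nonneg_left h3 hC)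
  gcongr

lemma qbinom {q t : ℝ} (hq0 : 0 < q) (hq1 : q < 1) (hqt : q < t) (ht1 : t < 1)
    {x : ℝ} (hx0 : 0 ≤ x) (hx1 : x < 1) :
    (∑' m, rr q t m * x ^ m) * qPochInf q x = qPochInf q (t * x) := by
  have ha : ∀ m, |rr q t m| ≤ 1 := fun m => by
    rw [abs_of_pos (rr_pos hq0 hq1 hqt ht1 m)]; exact rr_le_one hq0 hq1 hqt ht1 m
  set G : ℝ → ℝ := fun x => ∑' m, rr q t m * x ^ m with hG
  have step : ∀ y, 0 ≤ y → y < 1 → (1 - y) * G y = (1 - t * y) * G (q * y) := by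
    intro y hy0 hy1
    have h1 : |y| < 1 := by rwa [abs_of_nonneg hy0]
    have h2 : |q * y| < 1 := by
      rw [abs_of_nonneg (by positivity)]; nlinarith
    have s1 := bsum ha h1
    have s2 := bsum ha h2
    have s1' := bsum (fun k => ha (k + 1)) h1
    have s2' := bsum (fun k => ha (k + 1)) h2
    have e1 : G y - G (q * y) = y * (G y - t * G (q * y)) := by
      conv_lhs => simp only [hG]
      rw [bshift ha h1, bshift ha h2, add_sub_add_left_eq_sub, ← tsum_mul_left, ← tsum_mul_left,
        ← (s1'.mul_left y).tsum_sub (s2'.mul_left (q * y))]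
      simp only [hG]
      rw [← tsum_mul_left, ← s1.tsum_sub (s2.mul_left t), ← tsum_mul_left]
      refine tsum_congr fun m => ?_
      have := rr_succ (t := t) m hq0 hq1
      rw [mul_pow]
      calc _ = y ^ (m + 1) * (rr q t (m + 1) * (1 - q ^ (m + 1))) := by ring
        _ = _ := by rw [this]; ring
    linarith
  have it : ∀ N : ℕ, G x * ∏ j ∈ Finset.range N, (1 - q ^ j * x)
      = (∏ j ∈ Finset.range N, (1 - q ^ j * (t * x))) * G (q ^ N * x) := by
    intro N
    induction N with
    | zero => simp
    | succ N ih =>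
      have h := step (q ^ N * x) (by positivity)
        (by have := qp_fac q x hq0 hq1 hx0 hx1 N; linarith)
      rw [Finset.prod_range_succ, Finset.prod_range_succ, ← mul_assoc, ih]
      have e : q ^ (N + 1) * x = q * (q ^ N * x) := by ring
      rw [e]
      linear_combination (∏ j ∈ Finset.range N, (1 - q ^ j * (t * x))) * h
  have l1 := (qp_tendsto q x hq0 hq1).const_mul (G x)
  have l2 := (qp_tendsto q (t * x) hq0 hq1).mul
    (blim ha (by rwa [abs_of_nonneg hx0] : |x| < 1) hq0 hq1)
  have := tendsto_nhds_unique l1 (l2.congr fun N => (it N).symm)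
  rw [this]; simp [rr]

lemma volt {a s : ℕ → ℝ} {C t : ℝ} (ha : ∀ k, |a k| ≤ C) (hs : ∀ m, 0 ≤ s m)
    (hss : Summable s) (ht0 : 0 < t) (ht1 : t < 1)
    (hrec : ∀ k, a (k + 1) = a k * ∑' m, s m * t ^ (k * m)) {x : ℝ} (hx : |x| < 1) :
    ∑' k, a k * x ^ k = a 0 + x * ∑' m, s m * ∑' k, a k * (t ^ m * x) ^ k := by
  have hC : 0 ≤ C := (abs_nonneg _).trans (ha 0)
  rw [bshift ha hx]
  congr 2
  have hsum : Summable (Function.uncurry fun (k m : ℕ) => s m * (a k * (t ^ m * x) ^ k)) := by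
    have := (((summable_geometric_of_lt_one (abs_nonneg x) hx).mul_left C).mul_of_nonneg hss
      (fun k => by positivity) hs)
    refine Summable.of_norm_bounded this ?_
    rintro ⟨k, m⟩
    simp only [Function.uncurry]
    have h1 : |t ^ m * x| ^ k ≤ |x| ^ k := by
      refine pow_le_pow_left₀ (abs_nonneg _) ?_ k
      rw [abs_mul, abs_of_pos (by positivity : 0 < t ^ m)]
      exact mul_le_of_le_one_left (abs_nonneg x) (pow_le_one₀ ht0.le ht1.le)
    rw [Real.norm_eq_abs, abs_mul, abs_mul, abs_pow, abs_of_nonneg (hs m), mul_comm]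
    exact mul_le_mul_of_nonneg_right (mul_le_mul (ha k) h1 (by positivity) hC) (hs m)
  calc _ = ∑' k, ∑' m, s m * (a k * (t ^ m * x) ^ k) := by
        refine tsum_congr fun k => ?_
        rw [hrec, mul_right_comm, ← tsum_mul_left]
        refine tsum_congr fun m => ?_
        rw [mul_pow, ← pow_mul, mul_comm m k]; ring
    _ = ∑' m, ∑' k, s m * (a k * (t ^ m * x) ^ k) := hsum.tsum_comm.symm
    _ = _ := tsum_congr fun m => tsum_mul_left

lemma Ypos {c r : ℕ → ℝ} {C t : ℝ} (hc : ∀ k, |c k| ≤ C) (hc0 : 0 < c 0)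
    (hr : ∀ m, 0 ≤ r m) (hr1 : ∀ m, r m ≤ 1) (hra : ∀ m, r (m + 1) ≤ r m) (hr0 : r 0 = 1)
    (ht0 : 0 < t) (ht1 : t < 1)
    (hrec : ∀ k, c (k + 1) = c k * ∑' m, (r m * t ^ m) * t ^ (k * m))
    {w : ℝ} (hw0 : 0 < w) (hw1 : w < 1) : 0 ≤ ∑' k, c k * (-w) ^ k := by
  have hC : 0 ≤ C := (abs_nonneg _).trans (hc 0)
  set Y : ℝ → ℝ := fun y => ∑' k, c k * (-y) ^ k with hY
  have hss : Summable (fun m => r m * t ^ m) :=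
    bsum (C := 1) (fun m => by rw [abs_of_nonneg (hr m)]; exact hr1 m)
      (by rwa [abs_of_pos ht0])
  have eq : ∀ y, 0 < y → y < 1 → Y y = c 0 - y * ∑' m, (r m * t ^ m) * Y (t ^ m * y) := by
    intro y h0 h1
    have := volt hc (fun m => mul_nonneg (hr m) (by positivity)) hss ht0 ht1 hrec (x := -y)
      (by rwa [abs_neg, abs_of_pos h0])
    simp only [hY, this, mul_neg]
    ring
  have pw : ∀ y, 0 < y → y < 1 → ∀ n : ℕ, 0 < t ^ n * y ∧ t ^ n * y ≤ y := fun y h0 h1 n =>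
    ⟨by positivity, mul_le_of_le_one_left h0.le (pow_le_one₀ ht0.le ht1.le)⟩
  have sY : ∀ y, 0 < y → y < 1 → Summable (fun m => (r m * t ^ m) * Y (t ^ m * y)) := by
    intro y h0 h1
    refine Summable.of_norm_bounded (hss.mul_right (C * (1 - y)⁻¹)) fun m => ?_
    obtain ⟨p1, p2⟩ := pw y h0 h1 m
    have := bbound hc (x := -(t ^ m * y)) (by rw [abs_neg, abs_of_pos p1]; linarith)
    rw [abs_neg, abs_of_pos p1] at this
    have h3 : (1 - t ^ m * y)⁻¹ ≤ (1 - y)⁻¹ := inv_anti₀ (by linarith) (by linarith)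
    rw [Real.norm_eq_abs, abs_mul, abs_of_nonneg (mul_nonneg (hr m) (by positivity))]
    exact mul_le_mul_of_nonneg_left (this.trans (mul_le_mul_of_nonneg_left h3 hC))
      (mul_nonneg (hr m) (by positivity))
  have step : ∀ y, 0 < y → y < 1 → (∀ m : ℕ, 0 ≤ Y (t ^ (m + 1) * y)) → 0 ≤ Y y := by
    intro y h0 h1 hm
    have hty0 : 0 < t * y := by positivity
    have hty1 : t * y < 1 := by nlinarith
    have e1 := eq y h0 h1
    have e2 := eq (t * y) hty0 hty1
    have s1 := sY y h0 h1
    have s2 := sY (t * y) hty0 hty1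
    rw [s1.tsum_eq_zero_add] at e1
    have s1' := (summable_nat_add_iff 1).2 s1
    have hk : t * (∑' m, (r m * t ^ m) * Y (t ^ m * (t * y)))
        - ∑' m, (r (m + 1) * t ^ (m + 1)) * Y (t ^ (m + 1) * y) ≥ 0 := by
      rw [← tsum_mul_left, ← (s2.mul_left t).tsum_sub s1']
      refine tsum_nonneg fun m => ?_
      have : t ^ m * (t * y) = t ^ (m + 1) * y := by ring
      rw [this]
      have : t * (r m * t ^ m * Y (t ^ (m + 1) * y))
          - r (m + 1) * t ^ (m + 1) * Y (t ^ (m + 1) * y)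
          = (r m - r (m + 1)) * t ^ (m + 1) * Y (t ^ (m + 1) * y) := by ring
      rw [this]
      exact mul_nonneg (mul_nonneg (by linarith [hra m]) (by positivity)) (hm m)
    simp only [hr0, pow_zero, one_mul] at e1
    have h2 := hm 0
    simp only [zero_add, pow_one] at h2
    have h3 := mul_nonneg h0.le hk
    have : 0 ≤ (1 + y) * Y y := by nlinarith
    exact nonneg_of_mul_nonneg_right this (by linarith)
  have hl := blim hc (x := -w) (by rwa [abs_neg, abs_of_pos hw0]) ht0 ht1
  obtain ⟨N, hN⟩ := eventually_atTop.1 (hl.eventually (lt_mem_nhds hc0))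
  have key : ∀ j n : ℕ, N ≤ n + j → 0 ≤ Y (t ^ n * w) := by
    have base : ∀ n, N ≤ n → 0 ≤ Y (t ^ n * w) := fun n hn => by
      have := (hN n hn).le
      simpa only [hY, mul_neg] using this
    intro j
    induction j with
    | zero => exact fun n hn => base n hn
    | succ j ih =>
      intro n hn
      obtain ⟨p1, p2⟩ := pw w hw0 hw1 n
      refine step _ p1 (by linarith) fun m => ?_
      have := ih (m + 1 + n) (by omega)
      rwa [pow_add, mul_assoc] at this
  simpa using key N 0 (by simp)

theorem core {q t : ℝ} (hq0 : 0 < q) (hq1 : q < 1) (hqt : q < t) (ht1 : t < 1)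
    {w : ℝ} (hw0 : 0 < w) (hw1 : w < 1) :
    (∑' k : ℕ, qPochInf q (q * t ^ k) / qPochInf q q * (-w) ^ k)
      ≤ 1 / (1 + qPochInf q (q * t) / qPochInf q q * w) := by
  have ht0 := hq0.trans hqt
  set P := qPochInf q with hP
  have hPq : 0 < P q := qp_pos q q hq0 hq1 hq0.le hq1
  have tk : ∀ k : ℕ, t ^ k ≤ 1 := fun k => pow_le_one₀ ht0.le ht1.le
  have tk1 : ∀ k : ℕ, t ^ (k + 1) < 1 := fun k => pow_lt_one₀ ht0.le ht1 (by simp)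
  have qtk : ∀ k : ℕ, q * t ^ k < 1 := fun k => by nlinarith [tk k]
  have bpos : ∀ k : ℕ, 0 < P (q * t ^ k) := fun k => qp_pos q _ hq0 hq1 (by positivity) (qtk k)
  have cpos : ∀ k : ℕ, 0 < P (t ^ (k + 1)) := fun k =>
    qp_pos q _ hq0 hq1 (by positivity) (tk1 k)
  set b : ℕ → ℝ := fun k => P (q * t ^ k) / P q with hb
  set c : ℕ → ℝ := fun k => P (t ^ (k + 1)) / P q with hcdef
  have hbb : ∀ k, |b k| ≤ 1 / P q := fun k => by
    rw [abs_of_pos (div_pos (bpos k) hPq)]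
    exact div_le_div_of_nonneg_right (qp_le_one q _ hq0 hq1 (by positivity) (qtk k)) hPq.le
  have hcb : ∀ k, |c k| ≤ 1 / P q := fun k => by
    rw [abs_of_pos (div_pos (cpos k) hPq)]
    exact div_le_div_of_nonneg_right (qp_le_one q _ hq0 hq1 (by positivity) (tk1 k)) hPq.le
  have r0 := fun m => (rr_pos hq0 hq1 hqt ht1 m).le
  have r1 := rr_le_one hq0 hq1 hqt ht1
  have r1' : ∀ m, |rr q t m| ≤ 1 := fun m => by rw [abs_of_nonneg (r0 m)]; exact r1 m
  have brec : ∀ k, b (k + 1) = b k * ∑' m, (rr q t m * q ^ m) * t ^ (k * m) := fun k => by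
    have h := qbinom hq0 hq1 hqt ht1 (x := q * t ^ k) (by positivity) (qtk k)
    have e : ∑' m, (rr q t m * q ^ m) * t ^ (k * m) = ∑' m, rr q t m * (q * t ^ k) ^ m :=
      tsum_congr fun m => by rw [mul_pow, ← pow_mul]; ring
    have e2 : q * t ^ (k + 1) = t * (q * t ^ k) := by ring
    simp only [hb]
    rw [e, e2, hP, ← h]; ring
  have crec : ∀ k, c (k + 1) = c k * ∑' m, (rr q t m * t ^ m) * t ^ (k * m) := fun k => by
    have h := qbinom hq0 hq1 hqt ht1 (x := t ^ (k + 1)) (by positivity) (tk1 k)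
    have e : ∑' m, (rr q t m * t ^ m) * t ^ (k * m) = ∑' m, rr q t m * (t ^ (k + 1)) ^ m :=
      tsum_congr fun m => by rw [pow_succ, mul_pow, ← pow_mul]; ring
    have e2 : t ^ (k + 1 + 1) = t * t ^ (k + 1) := by ring
    simp only [hcdef]
    rw [e, e2, hP, ← h]; ring
  have bc : ∀ k, b (k + 1) * (1 - t ^ (k + 1)) = c k := fun k => by
    simp only [hb, hcdef]
    rw [hP, qp_succ q (t ^ (k + 1)) hq0 hq1]; ring
  set U : ℝ → ℝ := fun y => ∑' k, b k * (-y) ^ k with hU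
  have hab : ∀ y : ℝ, 0 < y → y < 1 → |-y| < 1 := fun y h0 h1 => by rwa [abs_neg, abs_of_pos h0]
  have Ustep : ∀ y, 0 < y → y < 1 → U y ≤ U (t * y) := by
    intro y h0 h1
    have hY := Ypos hcb (div_pos (cpos 0) hPq) r0 r1 (rr_anti hq0 hq1 hqt ht1) (by simp [rr])
      ht0 ht1 crec h0 h1
    have a1 := hab y h0 h1
    have a2 := hab (t * y) (by positivity) (by nlinarith)
    have s1 := bsum (fun k => hbb (k + 1)) a1
    have s2 := bsum (fun k => hbb (k + 1)) a2
    have : U (t * y) - U y = y * ∑' k, c k * (-y) ^ k := by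
      simp only [hU]
      rw [bshift hbb a1, bshift hbb a2, add_sub_add_left_eq_sub, ← tsum_mul_left,
        ← tsum_mul_left, ← (s2.mul_left _).tsum_sub (s1.mul_left _), ← tsum_mul_left]
      refine tsum_congr fun k => ?_
      rw [← bc k, show -(t * y) = t * (-y) by ring, mul_pow]
      ring
    nlinarith [mul_nonneg h0.le hY]
  have pw : ∀ n : ℕ, 0 < t ^ n * w ∧ t ^ n * w < 1 := fun n =>
    ⟨by positivity, by nlinarith [tk n]⟩
  have Umono : ∀ n : ℕ, U w ≤ U (t ^ n * w) := by
    intro n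
    induction n with
    | zero => simp
    | succ n ih =>
      have := Ustep _ (pw n).1 (pw n).2
      rw [← mul_assoc, ← pow_succ'] at this
      exact ih.trans this
  have hss : Summable (fun m => rr q t m * q ^ m) := bsum r1' (by rwa [abs_of_pos hq0])
  have hv := volt hbb (fun m => mul_nonneg (r0 m) (by positivity)) hss ht0 ht1 brec
    (hab w hw0 hw1)
  have hb0 : b 0 = 1 := by simp only [hb, pow_zero, mul_one]; exact div_self hPq.ne'
  have hb1 : b 1 = ∑' m, rr q t m * q ^ m := by
    have := brec 0
    simpa [hb0] using this
  have hv' : U w = 1 - w * ∑' m, (rr q t m * q ^ m) * U (t ^ m * w) := by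
    simp only [hU]
    rw [hv, hb0]; simp only [mul_neg]; ring
  have sU : Summable (fun m => (rr q t m * q ^ m) * U (t ^ m * w)) := by
    refine Summable.of_norm_bounded (hss.mul_right (1 / P q * (1 - w)⁻¹)) fun m => ?_
    obtain ⟨p1, p2⟩ := pw m
    have := bbound hbb (hab _ p1 p2)
    rw [abs_neg, abs_of_pos p1] at this
    have h3 : (1 - t ^ m * w)⁻¹ ≤ (1 - w)⁻¹ := inv_anti₀ (by linarith) (by nlinarith [tk m])
    have hn : 0 ≤ rr q t m * q ^ m := mul_nonneg (r0 m) (by positivity)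
    rw [Real.norm_eq_abs, abs_mul, abs_of_nonneg hn]
    exact mul_le_mul_of_nonneg_left (this.trans (mul_le_mul_of_nonneg_left h3 (by positivity))) hn
  have hle : b 1 * U w ≤ ∑' m, (rr q t m * q ^ m) * U (t ^ m * w) := by
    rw [hb1, ← tsum_mul_right]
    exact (hss.mul_right _).tsum_le_tsum (fun m => mul_le_mul_of_nonneg_left (Umono m)
      (mul_nonneg (r0 m) (by positivity))) sU
  have hb1p : 0 < b 1 := div_pos (bpos 1) hPq
  have hb1e : P (q * t) / P q = b 1 := by simp [hb]
  rw [hb1e]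
  change U w ≤ _
  rw [le_div_iff₀ (by positivity)]
  nlinarith [mul_le_mul_of_nonneg_left hle hw0.le]

theorem qML_upper_bound (q α : ℝ) (hq0 : 0 < q) (hq1 : q < 1)
    (hα0 : 0 < α) (hα1 : α < 1) :
    ∀ z : ℝ, 0 < z → z < (1 - q) ^ (-α) →
      qML q α 1 (-z) ≤ 1 / (1 + (qGamma q (α + 1))⁻¹ * z) := by
  intro z hz0 hz1
  have h1q : 0 < 1 - q := by linarith
  have hp : 0 < (1 - q) ^ α := Real.rpow_pos_of_pos h1q α
  have hqt : q < q ^ α := by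
    simpa using Real.rpow_lt_rpow_of_exponent_gt hq0 hq1 hα1
  have ht1 : q ^ α < 1 := Real.rpow_lt_one hq0.le hq1 hα0
  have hw1 : (1 - q) ^ α * z < 1 := by
    rw [Real.rpow_neg h1q.le] at hz1
    have := mul_lt_mul_of_pos_left hz1 hp
    rwa [mul_inv_cancel₀ hp.ne'] at this
  have hG : ∀ k : ℕ, (qGamma q (α * k + 1))⁻¹
      = qPochInf q (q * (q ^ α) ^ k) / qPochInf q q * ((1 - q) ^ α) ^ k := by
    intro k
    have e1 : q ^ (α * k + 1) = q * (q ^ α) ^ k := by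
      rw [Real.rpow_add hq0, Real.rpow_mul hq0.le, Real.rpow_natCast, Real.rpow_one, mul_comm]
    have e2 : (1 - q) ^ (1 - (α * k + 1)) = (((1 - q) ^ α) ^ k)⁻¹ := by
      rw [show 1 - (α * (k : ℝ) + 1) = -(α * k) by ring, Real.rpow_neg h1q.le,
        Real.rpow_mul h1q.le, Real.rpow_natCast]
    rw [qGamma, e1, e2, mul_inv, inv_div, inv_inv]
  have h := core hq0 hq1 hqt ht1 (mul_pos hp hz0) hw1
  have hG1 := hG 1
  simp only [Nat.cast_one, mul_one, pow_one] at hG1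
  rw [hG1, mul_assoc]
  refine le_trans (le_of_eq ?_) h
  refine tsum_congr fun k => ?_
  rw [div_eq_mul_inv, hG, ← mul_neg, mul_pow]
  ring
end

section
/- Let 0<q<1 and 0<α<1. Then for every real z with 0<z<(1−q)^{−α}, one has 0 < e_{α,1}(−z;q) < 1. -/
open scoped BigOperators

open Filter Topology

lemma aux_abstract (f c w : ℕ → ℝ) (C : ℝ) (hf : Tendsto f atTop (𝓝 1)) (hc : ∀ j, 0 ≤ c j)
    (hC : 0 < C) (hcs : HasSum c (1 - C)) (hw : ∀ n, 0 < w n)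
    (heq : ∀ n, HasSum (fun j => c j * f (n + j + 1)) ((1 + w n) * f n - C)) :
    0 < f 0 ∧ f 0 < 1 := by
  have hC1 : 0 ≤ 1 - C := hcs.nonneg hc
  constructor
  · obtain ⟨N, hN⟩ := eventually_atTop.1 (hf.eventually (lt_mem_nhds (zero_lt_one)))
    have key : ∀ m ≥ 0, 0 < f m := by
      refine Nat.decreasingInduction (n := N) (motive := fun n _ => ∀ m ≥ n, 0 < f m)
        ?_ hN (Nat.zero_le N)
      intro k _ ih m hm
      rcases Nat.eq_or_lt_of_le hm with h | h
      · subst h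
        have h1 : 0 ≤ (1 + w k) * f k - C :=
          (heq k).nonneg (fun j => mul_nonneg (hc j) (ih _ (by omega)).le)
        have h2 := hw k
        by_contra h3
        nlinarith
      · exact ih m h
    exact key 0 le_rfl
  · have key : ∀ n, f n ≤ 1 := by
      by_contra! h
      obtain ⟨n, hn⟩ := h
      obtain ⟨N, hN⟩ := eventually_atTop.1 (hf.eventually (gt_mem_nhds hn))
      obtain ⟨p, -, hp⟩ := Finset.exists_max_image (Finset.range (N + n + 1)) f
        ⟨n, by simp⟩
      have hnp : f n ≤ f p := hp n (by simp)
      have hmax : ∀ m, f m ≤ f p := by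
        intro m
        by_cases hm : m < N + n + 1
        · exact hp m (by simpa using hm)
        · exact (hN m (by omega)).le.trans hnp
      have := hasSum_le (fun j => mul_le_mul_of_nonneg_left (hmax (p + j + 1)) (hc j)) (heq p)
        (hcs.mul_right (f p))
      have := mul_pos (hw p) (zero_lt_one.trans (hn.trans_le hnp))
      nlinarith
    have := hasSum_le (fun j => mul_le_mul_of_nonneg_left (key (0 + j + 1)) (hc j)) (heq 0)
        (hcs.mul_right 1)
    have h2 := hw 0
    by_contra h3
    nlinarith

lemma aux_summable (q a : ℝ) (hq0 : 0 < q) (hq1 : q < 1) : Summable (fun j : ℕ => -(q ^ j * a)) :=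
  ((summable_geometric_of_lt_one hq0.le hq1).mul_right a).neg

lemma aux_tendsto (q a : ℝ) (hq0 : 0 < q) (hq1 : q < 1) :
    Tendsto (fun n => ∏ j ∈ Finset.range n, (1 - q ^ j * a)) atTop (𝓝 (qPochInf q a)) := by
  have h : Multipliable (fun j : ℕ => 1 + -(q ^ j * a)) :=
    Real.multipliable_one_add_of_summable (aux_summable q a hq0 hq1)
  simp only [← sub_eq_add_neg] at h
  exact h.hasProd.tendsto_prod_nat

lemma aux_fac (q a : ℝ) (hq0 : 0 < q) (hq1 : q < 1) (ha0 : 0 < a) (ha1 : a < 1) (j : ℕ) :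
    0 < 1 - q ^ j * a ∧ 1 - q ^ j * a ≤ 1 := by
  have h1 : q ^ j ≤ 1 := pow_le_one₀ hq0.le hq1.le
  have h2 : 0 < q ^ j := by positivity
  constructor <;> nlinarith

lemma aux_pos (q a : ℝ) (hq0 : 0 < q) (hq1 : q < 1) (ha0 : 0 < a) (ha1 : a < 1) :
    0 < qPochInf q a := by
  have h := Real.summable_log_one_add_of_summable (aux_summable q a hq0 hq1)
  simp only [← sub_eq_add_neg] at h
  have := Real.rexp_tsum_eq_tprod (fun j => (aux_fac q a hq0 hq1 ha0 ha1 j).1) h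
  rw [qPochInf, ← this]
  exact Real.exp_pos _

lemma aux_le (q a : ℝ) (hq0 : 0 < q) (hq1 : q < 1) (ha0 : 0 < a) (ha1 : a < 1) :
    qPochInf q a ≤ 1 := by
  refine le_of_tendsto' (aux_tendsto q a hq0 hq1) fun n => ?_
  exact Finset.prod_le_one (fun j _ => (aux_fac q a hq0 hq1 ha0 ha1 j).1.le)
    (fun j _ => (aux_fac q a hq0 hq1 ha0 ha1 j).2)

noncomputable def auxB (q r : ℝ) : ℕ → ℝ
  | 0 => 1
  | (j + 1) => auxB q r j * ((q - r * q ^ j) / (1 - q ^ (j + 1)))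

lemma auxB_neg (q r : ℝ) (hq0 : 0 < q) (hq1 : q < 1) (hqr : q < r) (hr : r < 1) (j : ℕ) :
    auxB q r (j + 1) < 0 := by
  induction j with
  | zero =>
    simp only [auxB]
    have : (q - r * q ^ 0) / (1 - q ^ (0 + 1)) < 0 :=
      div_neg_of_neg_of_pos (by simp; linarith) (by simp; linarith)
    linarith
  | succ j ih =>
    rw [auxB]
    refine mul_neg_of_neg_of_pos ih (div_pos ?_ ?_)
    · have h1 : q ^ (j + 1) ≤ q := pow_le_of_le_one hq0.le hq1.le (by omega)
      have h2 : 0 < q ^ (j + 1) := by positivity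
      nlinarith
    · have := pow_lt_one₀ hq0.le hq1 (n := j + 1 + 1) (by omega)
      linarith

lemma auxB_summable (q r : ℝ) (hq0 : 0 < q) (hq1 : q < 1) (hqr : q < r) (hr : r < 1) :
    Summable (auxB q r) := by
  have hne : ∀ j, auxB q r j ≠ 0 := by
    intro j
    cases j with
    | zero => simp [auxB]
    | succ j => exact (auxB_neg q r hq0 hq1 hqr hr j).ne
  refine summable_of_ratio_test_tendsto_lt_one hq1 (Eventually.of_forall hne) ?_
  have h0 := tendsto_pow_atTop_nhds_zero_of_lt_one hq0.le hq1
  have h1 : Tendsto (fun j : ℕ => ‖(q - r * q ^ j) / (1 - q ^ (j + 1))‖) atTop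
      (𝓝 ‖(q - r * 0) / (1 - 0)‖) :=
    (((h0.const_mul r).const_sub q).div (((tendsto_add_atTop_iff_nat 1).2 h0).const_sub 1)
      (by norm_num)).norm
  have h2 : ‖(q - r * 0) / (1 - 0)‖ = q := by simp [abs_of_pos hq0]
  rw [h2] at h1
  refine h1.congr fun j => ?_
  rw [auxB, norm_mul, mul_div_cancel_left₀]
  simpa using hne j

lemma auxB_sum_x (q r : ℝ) (hq0 : 0 < q) (hq1 : q < 1) (hqr : q < r) (hr : r < 1)
    (x : ℝ) (hx0 : 0 ≤ x) (hx1 : x ≤ 1) : Summable (fun j => auxB q r j * x ^ j) := by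
  refine Summable.of_norm_bounded (auxB_summable q r hq0 hq1 hqr hr).norm fun j => ?_
  rw [norm_mul]
  refine mul_le_of_le_one_right (norm_nonneg _) ?_
  rw [Real.norm_of_nonneg (by positivity)]
  exact pow_le_one₀ hx0 hx1

lemma auxB_fun (q r : ℝ) (hq0 : 0 < q) (hq1 : q < 1) (hqr : q < r) (hr : r < 1)
    (x : ℝ) (hx0 : 0 ≤ x) (hx1 : x ≤ 1) :
    (∑' j, auxB q r j * x ^ j) * (1 - q * x)
      = (1 - r * x) * ∑' j, auxB q r j * (q * x) ^ j := by
  have s1 := auxB_sum_x q r hq0 hq1 hqr hr x hx0 hx1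
  have s2 := auxB_sum_x q r hq0 hq1 hqr hr (q * x) (by positivity) (by nlinarith)
  have e : ∀ j, auxB q r (j + 1) * x ^ (j + 1) - auxB q r (j + 1) * (q * x) ^ (j + 1)
      = q * x * (auxB q r j * x ^ j) - r * x * (auxB q r j * (q * x) ^ j) := by
    intro j
    have : 1 - q ^ (j + 1) ≠ 0 := by
      have := pow_lt_one₀ hq0.le hq1 (n := j + 1) (by omega)
      linarith
    have h : auxB q r (j + 1) * (1 - q ^ (j + 1)) = auxB q r j * (q - r * q ^ j) := by
      rw [auxB]; field_simp
    have : auxB q r (j + 1) * x ^ (j + 1) - auxB q r (j + 1) * (q * x) ^ (j + 1)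
      = (auxB q r (j + 1) * (1 - q ^ (j + 1))) * x ^ (j + 1) := by rw [mul_pow]; ring
    rw [this, h, mul_pow]; ring
  have h1 := s1.tsum_eq_zero_add
  have h2 := s2.tsum_eq_zero_add
  have h3 : ∑' j, (auxB q r (j + 1) * x ^ (j + 1) - auxB q r (j + 1) * (q * x) ^ (j + 1))
      = ∑' j, (q * x * (auxB q r j * x ^ j) - r * x * (auxB q r j * (q * x) ^ j)) :=
    tsum_congr e
  rw [((summable_nat_add_iff 1).2 s1).tsum_sub ((summable_nat_add_iff 1).2 s2),
    (s1.mul_left _).tsum_sub (s2.mul_left _), tsum_mul_left, tsum_mul_left] at h3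
  simp only [pow_zero, mul_one] at h1 h2
  linarith

lemma auxB_binom (q r : ℝ) (hq0 : 0 < q) (hq1 : q < 1) (hqr : q < r) (hr : r < 1)
    (x : ℝ) (hx0 : 0 ≤ x) (hx1 : x ≤ 1) :
    (∑' j, auxB q r j * x ^ j) * qPochInf q (q * x) = qPochInf q (r * x) := by
  have hn : ∀ n : ℕ, (∑' j, auxB q r j * x ^ j) * ∏ j ∈ Finset.range n, (1 - q ^ j * (q * x))
      = (∏ j ∈ Finset.range n, (1 - q ^ j * (r * x))) * ∑' j, auxB q r j * (q ^ n * x) ^ j := by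
    intro n
    induction n with
    | zero => simp
    | succ n ih =>
      have h1 : q ^ n ≤ 1 := pow_le_one₀ hq0.le hq1.le
      have h2 : 0 < q ^ n := by positivity
      have := auxB_fun q r hq0 hq1 hqr hr (q ^ n * x) (by positivity) (by nlinarith)
      rw [Finset.prod_range_succ, Finset.prod_range_succ, ← mul_assoc, ih,
        show q ^ (n + 1) * x = q * (q ^ n * x) by ring,
        show 1 - q ^ n * (q * x) = 1 - q * (q ^ n * x) by ring,
        show 1 - q ^ n * (r * x) = 1 - r * (q ^ n * x) by ring, mul_assoc, this]
      ring
  have hS : Tendsto (fun n : ℕ => ∑' j, auxB q r j * (q ^ n * x) ^ j) atTop (𝓝 1) := by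
    have h0 : Tendsto (fun n : ℕ => q ^ n * x) atTop (𝓝 0) := by
      simpa using (tendsto_pow_atTop_nhds_zero_of_lt_one hq0.le hq1).mul_const x
    have := tendsto_tsum_of_dominated_convergence (𝓕 := atTop)
      (f := fun n j => auxB q r j * (q ^ n * x) ^ j)
      (g := fun j => auxB q r j * 0 ^ j)
      (auxB_summable q r hq0 hq1 hqr hr).norm
      (fun j => (h0.pow j).const_mul _)
      (Eventually.of_forall fun n j => by
        rw [norm_mul]
        refine mul_le_of_le_one_right (norm_nonneg _) ?_
        rw [Real.norm_of_nonneg (by positivity)]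
        have h1 : q ^ n ≤ 1 := pow_le_one₀ hq0.le hq1.le
        exact pow_le_one₀ (by positivity) (by nlinarith))
    rw [tsum_eq_single 0 (by intro b hb; simp [hb])] at this
    simpa [auxB] using this
  refine tendsto_nhds_unique ((aux_tendsto q (q * x) hq0 hq1).const_mul _) ?_
  simp only [hn]
  simpa using (aux_tendsto q (r * x) hq0 hq1).mul hS

lemma aux_main (q α w : ℝ) (hq0 : 0 < q) (hq1 : q < 1)
    (hα0 : 0 < α) (hα1 : α < 1) (hw0 : 0 < w) (hw1 : w < 1) (G : ℕ → ℝ)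
    (hG : ∀ k : ℕ, G k = qPochInf q (q * (q ^ α) ^ k) / qPochInf q q) :
    0 < ∑' k, (-w) ^ k * G k ∧ ∑' k, (-w) ^ k * G k < 1 := by
  set s := q ^ α with hs
  set r := q ^ (1 - α) with hr
  have hs0 : 0 < s := Real.rpow_pos_of_pos hq0 _
  have hs1 : s < 1 := Real.rpow_lt_one hq0.le hq1 hα0
  have hr1 : r < 1 := Real.rpow_lt_one hq0.le hq1 (by linarith)
  have hr0 : 0 < r := Real.rpow_pos_of_pos hq0 _
  have hrs : r * s = q := by
    rw [hr, hs, ← Real.rpow_add hq0]; simp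
  have hqr : q < r := by nlinarith
  have hP := aux_pos q q hq0 hq1 hq0 hq1
  have hG0 : G 0 = 1 := by rw [hG]; simp [hP.ne']
  have hspow : ∀ k : ℕ, 0 < s ^ k ∧ s ^ k ≤ 1 := fun k =>
    ⟨by positivity, pow_le_one₀ hs0.le hs1.le⟩
  have hGb : ∀ k, ‖G k‖ ≤ 1 / qPochInf q q := by
    intro k
    obtain ⟨h1, h2⟩ := hspow k
    have h3 : 0 < q * s ^ k := by positivity
    have h4 : q * s ^ k < 1 := by nlinarith
    have := aux_pos q _ hq0 hq1 h3 h4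
    rw [hG, Real.norm_of_nonneg (by positivity)]
    gcongr
    exact aux_le q _ hq0 hq1 h3 h4
  set B := 1 / qPochInf q q
  have hB : 0 < B := by positivity
  have hgeo := summable_geometric_of_lt_one hw0.le hw1
  have hbs := auxB_summable q r hq0 hq1 hqr hr1
  have hS1 := auxB_binom q r hq0 hq1 hqr hr1 1 zero_le_one le_rfl
  simp only [one_pow, mul_one] at hS1
  set C := ∑' j, auxB q r j with hCdef
  have hCpos : 0 < C := by
    have := aux_pos q r hq0 hq1 hr0 hr1
    rw [← hS1] at this
    exact pos_of_mul_pos_left this hP.le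
  have hSk : ∀ k : ℕ, (∑' j, auxB q r j * (s ^ (k + 1)) ^ j) * G (k + 1) = G k := by
    intro k
    have := auxB_binom q r hq0 hq1 hqr hr1 (s ^ (k + 1)) (hspow _).1.le (hspow _).2
    rw [hG, hG, ← mul_div_assoc, this, pow_succ', ← mul_assoc, hrs]
  -- f
  set f : ℕ → ℝ := fun n => ∑' k, (-(w * s ^ n)) ^ k * G k with hf
  have hbd : ∀ n k, ‖(-(w * s ^ n)) ^ k * G k‖ ≤ w ^ k * B := by
    intro n k
    rw [norm_mul, norm_pow, norm_neg, Real.norm_of_nonneg (by positivity)]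
    have : w * s ^ n ≤ w := by have := hspow n; nlinarith
    gcongr
    exact hGb k
  have hfs : ∀ n, Summable (fun k => (-(w * s ^ n)) ^ k * G k) := fun n =>
    Summable.of_norm_bounded (hgeo.mul_right B) (hbd n)
  have hf1 : Tendsto f atTop (𝓝 1) := by
    have h0 : Tendsto (fun n : ℕ => -(w * s ^ n)) atTop (𝓝 0) := by
      simpa using ((tendsto_pow_atTop_nhds_zero_of_lt_one hs0.le hs1).const_mul w).neg
    have := tendsto_tsum_of_dominated_convergence (𝓕 := atTop)
      (f := fun n k => (-(w * s ^ n)) ^ k * G k)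
      (g := fun k => 0 ^ k * G k) (hgeo.mul_right B)
      (fun k => (h0.pow k).mul_const _) (Eventually.of_forall hbd)
    rw [tsum_eq_single 0 (by intro b hb; simp [hb])] at this
    simpa [hG0] using this
  have hfb : ∀ n, ‖f n‖ ≤ ∑' k, w ^ k * B := fun n =>
    tsum_of_norm_bounded (hgeo.mul_right B).hasSum (hbd n)
  have hbf : ∀ n, Summable (fun j => auxB q r j * f (n + j)) := fun n => by
    refine Summable.of_norm_bounded (hbs.norm.mul_right (∑' k, w ^ k * B)) fun j => ?_
    rw [norm_mul]
    gcongr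
    exact hfb _
  have hmain : ∀ n, ∑' j, auxB q r j * f (n + j) = C - w * s ^ n * f n := by
    intro n
    have hprod : Summable (Function.uncurry
        (fun j k => auxB q r j * ((-(w * s ^ (n + j))) ^ k * G k))) := by
      refine Summable.of_norm_bounded
        (g := fun p : ℕ × ℕ => ‖auxB q r p.1‖ * (w ^ p.2 * B)) ?_ ?_
      · exact Summable.mul_of_nonneg hbs.norm (hgeo.mul_right B) (fun _ => norm_nonneg _)
          (fun k => by positivity)
      · rintro ⟨j, k⟩
        simp only [Function.uncurry]
        rw [norm_mul]
        gcongr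
        exact hbd _ _
    have h1 : ∑' j, auxB q r j * f (n + j)
        = ∑' k, ∑' j, auxB q r j * ((-(w * s ^ (n + j))) ^ k * G k) := by
      rw [hprod.tsum_comm]
      simp only [hf, tsum_mul_left]
    have h2 : ∀ k, ∑' j, auxB q r j * ((-(w * s ^ (n + j))) ^ k * G k)
        = (-(w * s ^ n)) ^ k * ((∑' j, auxB q r j * (s ^ k) ^ j) * G k) := by
      intro k
      rw [← tsum_mul_right, ← tsum_mul_left]
      refine tsum_congr fun j => ?_
      rw [show -(w * s ^ (n + j)) = -(w * s ^ n) * s ^ j by ring, mul_pow, ← pow_mul, ← pow_mul,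
        mul_comm j k]
      ring
    have h3 : ∀ k, (-(w * s ^ n)) ^ (k + 1) * ((∑' j, auxB q r j * (s ^ (k + 1)) ^ j) * G (k + 1))
        = -(w * s ^ n) * ((-(w * s ^ n)) ^ k * G k) := by
      intro k
      rw [hSk, pow_succ]; ring
    have hsum : Summable (fun k =>
        (-(w * s ^ n)) ^ k * ((∑' j, auxB q r j * (s ^ k) ^ j) * G k)) := by
      rw [← summable_nat_add_iff 1]
      simp only [h3]
      exact (hfs n).mul_left _
    rw [h1, tsum_congr h2, hsum.tsum_eq_zero_add]
    simp only [h3, tsum_mul_left]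
    simp [hG0, hCdef, hf]
    ring
  have hcs : HasSum (fun j => -auxB q r (j + 1)) (1 - C) := by
    have h := ((summable_nat_add_iff 1).2 hbs).hasSum.neg
    have h2 := hbs.tsum_eq_zero_add
    have h3 : auxB q r 0 = 1 := rfl
    have e : 1 - C = -∑' b, auxB q r (b + 1) := by linarith
    rw [e]
    exact h
  have := aux_abstract f (fun j => -auxB q r (j + 1)) (fun n => w * s ^ n) C hf1
    (fun j => by have := auxB_neg q r hq0 hq1 hqr hr1 j; linarith) hCpos hcs
    (fun n => by positivity) (by
      intro n
      have h := ((summable_nat_add_iff 1).2 (hbf n)).hasSum.neg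
      have h2 := (hbf n).tsum_eq_zero_add
      have h3 : auxB q r 0 = 1 := rfl
      rw [hmain, h3, add_zero] at h2
      have e : (1 + w * s ^ n) * f n - C = -∑' b, auxB q r (b + 1) * f (n + (b + 1)) := by
        linarith
      simp only [e, neg_mul, add_assoc]
      exact h)
  simpa [hf] using this

theorem qML_between_zero_and_one (q α : ℝ) (hq0 : 0 < q) (hq1 : q < 1)
    (hα0 : 0 < α) (hα1 : α < 1) :
    ∀ z : ℝ, 0 < z → z < (1 - q) ^ (-α) →
      0 < qML q α 1 (-z) ∧ qML q α 1 (-z) < 1 := by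
  intro z hz0 hz1
  have hp : 0 < 1 - q := by linarith
  have ht : 0 < (1 - q) ^ α := Real.rpow_pos_of_pos hp _
  have hw1 : z * (1 - q) ^ α < 1 := by
    have := mul_lt_mul_of_pos_right hz1 ht
    rwa [← Real.rpow_add hp, neg_add_cancel, Real.rpow_zero] at this
  have := aux_main q α (z * (1 - q) ^ α) hq0 hq1 hα0 hα1 (by positivity) hw1 _ (fun k => rfl)
  have e : qML q α 1 (-z) = ∑' k : ℕ, (-(z * (1 - q) ^ α)) ^ k *
      (qPochInf q (q * (q ^ α) ^ k) / qPochInf q q) := by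
    rw [qML]
    refine tsum_congr fun k => ?_
    have h1 : q ^ (α * k + 1) = q * (q ^ α) ^ k := by
      rw [Real.rpow_add hq0, Real.rpow_mul hq0.le, Real.rpow_natCast, Real.rpow_one, mul_comm]
    have h2 : (1 - q) ^ (1 - (α * k + 1)) = (((1 - q) ^ α) ^ k)⁻¹ := by
      rw [show 1 - (α * k + 1) = -(α * k) by ring, Real.rpow_neg hp.le, Real.rpow_mul hp.le,
        Real.rpow_natCast]
    rw [qGamma, h1, h2, ← neg_mul, mul_pow, div_eq_mul_inv, mul_inv, inv_inv, inv_div]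
    ring
  rw [e]
  exact this
end

section
/- Let 0<q<1 and 0<α<1. Then for every real z with 0<z<(1−q)^{−α}, one has (Γ_q(α+1)^{−1}·z)/(1+Γ_q(α+1)^{−1}·z) ≤ 1 − e_{α,1}(−z;q) < 1. -/
open scoped BigOperators

open Filter Topology

noncomputable def qA (q a : ℝ) : ℕ → ℝ
  | 0 => 1
  | n + 1 => qA q a n * ((1 - a * q ^ n) / (1 - q ^ (n + 1)))

lemma qPoch_mult (q a : ℝ) (h0 : 0 < q) (h1 : q < 1) :
    Multipliable (fun j : ℕ => 1 - q ^ j * a) := by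
  have : Summable (fun j : ℕ => ‖-(q ^ j * a)‖) := by
    have := ((summable_geometric_of_lt_one h0.le h1).mul_right a).norm
    simpa using this
  simpa [sub_eq_add_neg] using multipliable_one_add_of_summable this

lemma qPoch_tendsto (q a : ℝ) (h0 : 0 < q) (h1 : q < 1) :
    Tendsto (fun N : ℕ => ∏ j ∈ Finset.range N, (1 - q ^ j * a)) atTop (𝓝 (qPochInf q a)) :=
  (qPoch_mult q a h0 h1).hasProd.tendsto_prod_nat

lemma qfac_pos (q a : ℝ) (h0 : 0 < q) (h1 : q < 1) (ha : 0 ≤ a) (ha1 : a < 1) (j : ℕ) :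
    0 < 1 - q ^ j * a := by
  have : q ^ j ≤ 1 := pow_le_one₀ h0.le h1.le
  nlinarith [pow_pos h0 j]

lemma qPoch_pos (q a : ℝ) (h0 : 0 < q) (h1 : q < 1) (ha : 0 ≤ a) (ha1 : a < 1) :
    0 < qPochInf q a := by
  have hn : 0 ≤ qPochInf q a := ge_of_tendsto' (qPoch_tendsto q a h0 h1)
    (fun N => Finset.prod_nonneg fun j _ => (qfac_pos q a h0 h1 ha ha1 j).le)
  have hne : qPochInf q a ≠ 0 := by
    have hs : Summable (fun j : ℕ => ‖-(q ^ j * a)‖) := by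
      have := ((summable_geometric_of_lt_one h0.le h1).mul_right a).norm
      simpa using this
    have := tprod_one_add_ne_zero_of_summable (f := fun j : ℕ => -(q ^ j * a))
      (fun j => by
        have := (qfac_pos q a h0 h1 ha ha1 j).ne'
        rwa [sub_eq_add_neg] at this) hs
    simpa [qPochInf, sub_eq_add_neg] using this
  exact lt_of_le_of_ne hn hne.symm

lemma qPoch_le (q a : ℝ) (h0 : 0 < q) (h1 : q < 1) (ha : 0 ≤ a) (ha1 : a < 1) :
    qPochInf q a ≤ 1 :=
  le_of_tendsto' (qPoch_tendsto q a h0 h1) fun N =>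
    Finset.prod_le_one (fun j _ => (qfac_pos q a h0 h1 ha ha1 j).le)
      (fun j _ => by have := mul_nonneg (pow_pos h0 j).le ha; linarith)

lemma qA_summable (q a x : ℝ) (h0 : 0 < q) (h1 : q < 1) (hx : |x| < 1) :
    Summable (fun n => ‖qA q a n * x ^ n‖) := by
  obtain ⟨r, hr, hr1⟩ := exists_between hx
  have hq := tendsto_pow_atTop_nhds_zero_of_lt_one h0.le h1
  have ht : Tendsto (fun n : ℕ => |(1 - a * q ^ n) / (1 - q ^ (n + 1)) * x|) atTop (𝓝 |x|) := by
    have hn : Tendsto (fun n : ℕ => 1 - a * q ^ n) atTop (𝓝 (1 - a * 0)) :=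
      (hq.const_mul a).const_sub 1
    have hq' : Tendsto (fun n : ℕ => q ^ (n + 1)) atTop (𝓝 0) :=
      hq.comp (tendsto_add_atTop_nat 1)
    have hd : Tendsto (fun n : ℕ => 1 - q ^ (n + 1)) atTop (𝓝 (1 - 0)) := hq'.const_sub 1
    have h2 : Tendsto (fun n : ℕ => (1 - a * q ^ n) / (1 - q ^ (n + 1)) * x) atTop
        (𝓝 ((1 - a * 0) / (1 - 0) * x)) :=
      (hn.div hd (by norm_num)).mul_const x
    have h3 := h2.abs
    rw [mul_zero, sub_zero, div_one, one_mul] at h3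
    exact h3
  suffices hev : ∀ᶠ n in atTop, ‖qA q a (n + 1) * x ^ (n + 1)‖ ≤ r * ‖qA q a n * x ^ n‖ by
    exact (summable_of_ratio_norm_eventually_le (f := fun n => qA q a n * x ^ n) hr1 hev).norm
  filter_upwards [ht.eventually_lt_const hr] with n hn
  have : qA q a (n + 1) * x ^ (n + 1)
      = ((1 - a * q ^ n) / (1 - q ^ (n + 1)) * x) * (qA q a n * x ^ n) := by
    simp only [qA]; ring
  rw [this, norm_mul, Real.norm_eq_abs]
  exact mul_le_mul_of_nonneg_right hn.le (norm_nonneg _)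

lemma qA_fun (q a x : ℝ) (h0 : 0 < q) (h1 : q < 1) (hx : |x| < 1) :
    (1 - x) * ∑' n, qA q a n * x ^ n = (1 - a * x) * ∑' n, qA q a n * (q * x) ^ n := by
  have hqx : |q * x| < 1 := by
    rw [abs_mul, abs_of_pos h0]; nlinarith [abs_nonneg x]
  have s1 := (qA_summable q a x h0 h1 hx).of_norm
  have s2 := (qA_summable q a (q * x) h0 h1 hqx).of_norm
  have e : ∑' n, (qA q a n * x ^ n - qA q a n * (q * x) ^ n)
      = ∑' n, (x * (qA q a n * x ^ n) - a * x * (qA q a n * (q * x) ^ n)) := by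
    rw [(s1.sub s2).tsum_eq_zero_add]
    simp only [pow_zero, sub_self, zero_add]
    refine tsum_congr fun n => ?_
    have : 1 - q ^ (n + 1) ≠ 0 := (sub_pos.2 (pow_lt_one₀ h0.le h1 (by simp))).ne'
    simp only [qA, mul_pow]
    field_simp
    ring
  rw [s1.tsum_sub s2, (s1.mul_left x).tsum_sub (s2.mul_left (a * x)), tsum_mul_left,
    tsum_mul_left] at e
  linarith

lemma qbinom_s13 (q a x : ℝ) (h0 : 0 < q) (h1 : q < 1) (hx : |x| < 1) :
    (∑' n, qA q a n * x ^ n) * qPochInf q x = qPochInf q (a * x) := by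
  have hN : ∀ N : ℕ, |q ^ N * x| ≤ |x| := fun N => by
    rw [abs_mul, abs_of_pos (pow_pos h0 N)]
    exact mul_le_of_le_one_left (abs_nonneg x) (pow_le_one₀ h0.le h1.le)
  have it : ∀ N : ℕ, (∑' n, qA q a n * x ^ n) * ∏ j ∈ Finset.range N, (1 - q ^ j * x)
      = (∏ j ∈ Finset.range N, (1 - q ^ j * (a * x))) * ∑' n, qA q a n * (q ^ N * x) ^ n := by
    intro N
    induction N with
    | zero => simp
    | succ N ih =>
      have := qA_fun q a (q ^ N * x) h0 h1 ((hN N).trans_lt hx)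
      rw [Finset.prod_range_succ, Finset.prod_range_succ, ← mul_assoc, ih]
      rw [show q ^ (N + 1) * x = q * (q ^ N * x) by ring]
      linear_combination (∏ j ∈ Finset.range N, (1 - q ^ j * (a * x))) * this
  have hlim : Tendsto (fun N : ℕ => ∑' n, qA q a n * (q ^ N * x) ^ n) atTop (𝓝 1) := by
    have h1' : ∑' n, qA q a n * (0:ℝ) ^ n = 1 := by
      rw [tsum_eq_single 0 (fun n hn => by simp [hn])]; simp [qA]
    rw [← h1']
    refine tendsto_tsum_of_dominated_convergence (qA_summable q a x h0 h1 hx) ?_ ?_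
    · intro n
      have hq : Tendsto (fun N : ℕ => q ^ N * x) atTop (𝓝 0) := by
        simpa using (tendsto_pow_atTop_nhds_zero_of_lt_one h0.le h1).mul_const x
      exact (hq.pow n).const_mul _
    · refine Eventually.of_forall fun N n => ?_
      rw [norm_mul, norm_mul, norm_pow, norm_pow]
      exact mul_le_mul_of_nonneg_left (pow_le_pow_left₀ (abs_nonneg _) (hN N) n) (norm_nonneg _)
  have t1 := (qPoch_tendsto q x h0 h1).const_mul (∑' n, qA q a n * x ^ n)
  have t2 := (qPoch_tendsto q (a * x) h0 h1).mul hlim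
  simp only [it] at t1
  simpa using tendsto_nhds_unique t1 t2

/-- coefficients -/
noncomputable def qc (q r : ℝ) (k : ℕ) : ℝ := qPochInf q (r ^ k * q) / qPochInf q q

noncomputable def qS (q r w : ℝ) : ℝ := ∑' k, qc q r k * (-w) ^ k

lemma rk (q r : ℝ) (h0 : 0 < q) (h1 : q < 1) (hr : q < r) (hr1 : r < 1) (k : ℕ) :
    0 < r ^ k * q ∧ r ^ k * q < 1 := by
  have hr0 := h0.trans hr
  have : r ^ k ≤ 1 := pow_le_one₀ hr0.le hr1.le
  have := pow_pos hr0 k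
  constructor
  · positivity
  · nlinarith

lemma qc_pos (q r : ℝ) (h0 : 0 < q) (h1 : q < 1) (hr : q < r) (hr1 : r < 1) (k : ℕ) :
    0 < qc q r k :=
  div_pos (qPoch_pos _ _ h0 h1 (rk q r h0 h1 hr hr1 k).1.le (rk q r h0 h1 hr hr1 k).2)
    (qPoch_pos q q h0 h1 h0.le h1)

lemma qc_le (q r : ℝ) (h0 : 0 < q) (h1 : q < 1) (hr : q < r) (hr1 : r < 1) (k : ℕ) :
    qc q r k ≤ (qPochInf q q)⁻¹ := by
  rw [qc, div_eq_mul_inv]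
  exact mul_le_of_le_one_left (inv_nonneg.2 (qPoch_pos q q h0 h1 h0.le h1).le)
    (qPoch_le _ _ h0 h1 (rk q r h0 h1 hr hr1 k).1.le (rk q r h0 h1 hr hr1 k).2)

lemma qc_zero (q r : ℝ) (h0 : 0 < q) (h1 : q < 1) : qc q r 0 = 1 := by
  simp [qc, (qPoch_pos q q h0 h1 h0.le h1).ne']

lemma qterm_le (q r : ℝ) (h0 : 0 < q) (h1 : q < 1) (hr : q < r) (hr1 : r < 1) (w : ℝ) (i k : ℕ) :
    ‖qc q r (k + i) * (-w) ^ k‖ ≤ (qPochInf q q)⁻¹ * |w| ^ k := by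
  rw [norm_mul, norm_pow, norm_neg, Real.norm_eq_abs, abs_of_pos (qc_pos q r h0 h1 hr hr1 _)]
  exact mul_le_mul_of_nonneg_right (qc_le q r h0 h1 hr hr1 _) (by positivity)

lemma qS_summable (q r : ℝ) (h0 : 0 < q) (h1 : q < 1) (hr : q < r) (hr1 : r < 1) (w : ℝ)
    (hw : |w| < 1) (i : ℕ) : Summable (fun k => qc q r (k + i) * (-w) ^ k) :=
  Summable.of_norm_bounded ((summable_geometric_of_lt_one (abs_nonneg w) hw).mul_left _)
    (qterm_le q r h0 h1 hr hr1 w i)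

lemma qtail_le (q r : ℝ) (h0 : 0 < q) (h1 : q < 1) (hr : q < r) (hr1 : r < 1) (w : ℝ)
    (hw : |w| < 1) (i : ℕ) :
    |∑' k, qc q r (k + i) * (-w) ^ k| ≤ (qPochInf q q)⁻¹ * (1 - |w|)⁻¹ :=
  tsum_of_norm_bounded ((hasSum_geometric_of_lt_one (abs_nonneg w) hw).mul_left _)
    (qterm_le q r h0 h1 hr hr1 w i)

lemma qtail_step (q r : ℝ) (h0 : 0 < q) (h1 : q < 1) (hr : q < r) (hr1 : r < 1) (w : ℝ)
    (hw : |w| < 1) (i : ℕ) :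
    ∑' k, qc q r (k + i) * (-w) ^ k = qc q r i - w * ∑' k, qc q r (k + (i + 1)) * (-w) ^ k := by
  rw [(qS_summable q r h0 h1 hr hr1 w hw i).tsum_eq_zero_add, ← tsum_mul_left]
  simp only [pow_zero, mul_one, zero_add, sub_eq_add_neg, ← tsum_neg]
  congr 1
  refine tsum_congr fun k => ?_
  rw [show k + 1 + i = k + (i + 1) by ring]; ring

lemma qconv (q r a : ℝ) (h0 : 0 < q) (h1 : q < 1) (hr : q < r) (hr1 : r < 1) (w : ℝ)
    (hw : |w| < 1) :
    ∑' n, qA q a n * q ^ n * qS q r (w * r ^ n)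
      = ∑' k, qPochInf q (a * (r ^ k * q)) / qPochInf q q * (-w) ^ k := by
  have hr0 := h0.trans hr
  have hP := qPoch_pos q q h0 h1 h0.le h1
  have hq : |q| < 1 := by rwa [abs_of_pos h0]
  have key : Summable (Function.uncurry fun n k : ℕ =>
      qA q a n * q ^ n * (qc q r k * (-(w * r ^ n)) ^ k)) := by
    refine Summable.of_norm_bounded ((qA_summable q a q h0 h1 hq).mul_of_nonneg
      ((summable_geometric_of_lt_one (abs_nonneg w) hw).mul_left (qPochInf q q)⁻¹)
      (fun _ => norm_nonneg _) (fun _ => by positivity)) ?_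
    rintro ⟨n, k⟩
    simp only [Function.uncurry]
    rw [norm_mul]
    refine mul_le_mul_of_nonneg_left ((qterm_le q r h0 h1 hr hr1 (w * r ^ n) 0 k).trans ?_)
      (norm_nonneg _)
    refine mul_le_mul_of_nonneg_left (pow_le_pow_left₀ (abs_nonneg _) ?_ k) (inv_nonneg.2 hP.le)
    rw [abs_mul, abs_of_pos (pow_pos hr0 n)]
    exact mul_le_of_le_one_right (abs_nonneg w) (pow_le_one₀ hr0.le hr1.le)
  have : ∀ n, qA q a n * q ^ n * qS q r (w * r ^ n)
      = ∑' k, qA q a n * q ^ n * (qc q r k * (-(w * r ^ n)) ^ k) := fun n => by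
    rw [qS, tsum_mul_left]
  simp only [this]
  rw [← key.tsum_comm]
  refine tsum_congr fun k => ?_
  have hk := rk q r h0 h1 hr hr1 k
  have hb := qbinom_s13 q a (r ^ k * q) h0 h1 (by rw [abs_of_pos hk.1]; exact hk.2)
  rw [← hb, qc, mul_div_assoc, mul_assoc, ← tsum_mul_right]
  refine tsum_congr fun n => ?_
  rw [neg_pow (w * r ^ n), neg_pow w, mul_pow, mul_pow, ← pow_mul, ← pow_mul, mul_comm n k]
  ring

lemma qA_neg (q r : ℝ) (h0 : 0 < q) (h1 : q < 1) (hr : q < r) (hr1 : r < 1) (n : ℕ) :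
    qA q r⁻¹ (n + 1) < 0 := by
  have hr0 := h0.trans hr
  have hd : ∀ n : ℕ, 0 < 1 - q ^ (n + 1) := fun n => sub_pos.2 (pow_lt_one₀ h0.le h1 (by simp))
  induction n with
  | zero =>
    have := one_lt_inv₀ hr0 |>.2 hr1
    simp only [qA, pow_zero, one_mul, mul_one]
    exact div_neg_of_neg_of_pos (by linarith) (hd 0)
  | succ n ih =>
    rw [qA]
    refine mul_neg_of_neg_of_pos ih (div_pos ?_ (hd _))
    have h3 : q ^ (n + 1) ≤ q := by
      rw [pow_succ]; exact mul_le_of_le_one_left h0.le (pow_le_one₀ h0.le h1.le)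
    rw [sub_pos, inv_mul_lt_iff₀ hr0]; linarith

lemma qA_pos (q r : ℝ) (h0 : 0 < q) (h1 : q < 1) (hr : q < r) (hr1 : r < 1) (n : ℕ) :
    0 < qA q r n := by
  have hr0 := h0.trans hr
  have hd : ∀ n : ℕ, 0 < 1 - q ^ (n + 1) := fun n => sub_pos.2 (pow_lt_one₀ h0.le h1 (by simp))
  induction n with
  | zero => simp [qA]
  | succ n ih =>
    rw [qA]
    refine mul_pos ih (div_pos ?_ (hd _))
    have : q ^ n ≤ 1 := pow_le_one₀ h0.le h1.le
    nlinarith [pow_pos h0 n]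

lemma qS_main (q r : ℝ) (h0 : 0 < q) (h1 : q < 1) (hr : q < r) (hr1 : r < 1) (w : ℝ)
    (hw0 : 0 < w) (hw : w < 1) :
    0 < qS q r w ∧ qS q r w * (1 + qc q r 1 * w) ≤ 1 := by
  have hr0 := h0.trans hr
  have hP := qPoch_pos q q h0 h1 h0.le h1
  have hq : |q| < 1 := by rwa [abs_of_pos h0]
  have hwm0 : ∀ m : ℕ, 0 < w * r ^ m := fun m => by positivity
  have hwm : ∀ m : ℕ, w * r ^ m ≤ w := fun m =>
    mul_le_of_le_one_right hw0.le (pow_le_one₀ hr0.le hr1.le)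
  have habs : ∀ m : ℕ, |w * r ^ m| < 1 := fun m => by
    rw [abs_of_pos (hwm0 m)]; linarith [hwm m]
  set M := (qPochInf q q)⁻¹ * (1 - w)⁻¹ with hM
  have hM0 : 0 < M := mul_pos (inv_pos.2 hP) (inv_pos.2 (by linarith))
  have tail : ∀ i m : ℕ, |∑' k, qc q r (k + i) * (-(w * r ^ m)) ^ k| ≤ M := fun i m => by
    refine (qtail_le q r h0 h1 hr hr1 _ (habs m) i).trans ?_
    rw [abs_of_pos (hwm0 m)]
    refine mul_le_mul_of_nonneg_left ?_ (inv_nonneg.2 hP.le)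
    exact inv_anti₀ (by linarith) (by linarith [hwm m])
  set F : ℕ → ℝ := fun m => qS q r (w * r ^ m) with hF
  have hFM : ∀ m, |F m| ≤ M := fun m => tail 0 m
  set e : ℕ → ℝ := fun n => -(qA q r⁻¹ (n + 1) * q ^ (n + 1)) with he
  have he0 : ∀ n, 0 ≤ e n := fun n => by
    have := mul_neg_of_neg_of_pos (qA_neg q r h0 h1 hr hr1 n) (pow_pos h0 (n + 1))
    simp only [he]; linarith
  have hes : Summable e :=
    ((summable_nat_add_iff 1).2 (qA_summable q r⁻¹ q h0 h1 hq).of_norm).neg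
  have hsF : ∀ m, Summable (fun n => e n * F (m + (n + 1))) := fun m =>
    Summable.of_norm_bounded (hes.mul_right M) fun n => by
      rw [norm_mul, Real.norm_eq_abs, abs_of_nonneg (he0 n)]
      exact mul_le_mul_of_nonneg_left (hFM _) (he0 n)
  set κ := qPochInf q (r⁻¹ * q) / qPochInf q q with hκ
  have hκ0 : 0 < κ := div_pos (qPoch_pos _ _ h0 h1 (by positivity)
    (by rw [inv_mul_lt_iff₀ hr0]; linarith)) hP
  -- first relation
  have R2 : ∀ m, (1 + w * r ^ m) * F m = κ + ∑' n, e n * F (m + (n + 1)) := by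
    intro m
    have h := qconv q r r⁻¹ h0 h1 hr hr1 (w * r ^ m) (habs m)
    have hs : Summable fun n => qA q r⁻¹ n * q ^ n * qS q r (w * r ^ m * r ^ n) := by
      rw [← summable_nat_add_iff 1]
      refine (hsF m).neg.congr fun n => ?_
      simp only [he, hF]
      rw [pow_add r m, ← mul_assoc w]; ring
    have hs2 : ∀ k, qPochInf q (r⁻¹ * (r ^ (k + 1) * q)) / qPochInf q q * (-(w * r ^ m)) ^ (k + 1)
        = -(w * r ^ m) * (qc q r (k + 0) * (-(w * r ^ m)) ^ k) := fun k => by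
      rw [show r⁻¹ * (r ^ (k + 1) * q) = r ^ k * q by rw [pow_succ]; field_simp, qc]; simp only [add_zero]; ring
    have hs3 : Summable fun k : ℕ =>
        qPochInf q (r⁻¹ * (r ^ k * q)) / qPochInf q q * (-(w * r ^ m)) ^ k := by
      rw [← summable_nat_add_iff 1]
      simp only [hs2]
      exact (qS_summable q r h0 h1 hr hr1 _ (habs m) 0).mul_left _
    rw [hs.tsum_eq_zero_add, hs3.tsum_eq_zero_add] at h
    simp only [hs2, tsum_mul_left] at h
    have e1 : ∑' n, e n * F (m + (n + 1))
        = -∑' n, qA q r⁻¹ (n + 1) * q ^ (n + 1) * qS q r (w * r ^ m * r ^ (n + 1)) := by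
      rw [← tsum_neg]
      refine tsum_congr fun n => ?_
      simp only [he, hF]
      rw [pow_add r m, ← mul_assoc w]; ring
    have e2 : ∑' k, qc q r (k + 0) * (-(w * r ^ m)) ^ k = F m := rfl
    rw [e2] at h
    simp only [show qA q r⁻¹ 0 = 1 from rfl, pow_zero, one_mul, mul_one] at h
    rw [e1]
    change F m + _ = κ + _ at h
    linarith
  -- behaviour near zero
  have hz : Tendsto (fun m : ℕ => w * r ^ m) atTop (𝓝 0) := by
    simpa using (tendsto_pow_atTop_nhds_zero_of_lt_one hr0.le hr1).const_mul w
  have x1 : ∀ m, F m = 1 - w * r ^ m * ∑' k, qc q r (k + 1) * (-(w * r ^ m)) ^ k := fun m => by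
    have := qtail_step q r h0 h1 hr hr1 _ (habs m) 0
    rw [qc_zero q r h0 h1] at this
    exact this
  have x2 : ∀ m, F m = 1 - w * r ^ m * (qc q r 1 - w * r ^ m *
      ∑' k, qc q r (k + 2) * (-(w * r ^ m)) ^ k) := fun m => by
    rw [x1 m, qtail_step q r h0 h1 hr hr1 _ (habs m) 1]
  have down : ∀ Q : ℕ → Prop, (∀ᶠ m in atTop, Q m) → (∀ m, (∀ n, Q (m + (n + 1))) → Q m) →
      ∀ m, Q m := by
    intro Q hQ hs
    obtain ⟨N, hN⟩ := eventually_atTop.1 hQ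
    have : ∀ j m, N ≤ m + j → Q m := by
      intro j
      induction j with
      | zero => intro m hm; exact hN m hm
      | succ j ih => intro m hm; exact hs m fun n => ih _ (by omega)
    intro m
    exact this N m (by omega)
  have pos : ∀ m, 0 < F m := by
    refine down _ ?_ ?_
    · filter_upwards [hz.eventually_lt_const (inv_pos.2 hM0)] with m hm
      rw [x1 m]
      have h3 := (le_abs_self _).trans (tail 1 m)
      have h4 := mul_le_mul_of_nonneg_left h3 (hwm0 m).le
      have h5 : w * r ^ m * M < 1 := by
        rwa [lt_inv_comm₀ (hwm0 m) hM0, ← one_div, lt_div_iff₀ (hwm0 m), mul_comm] at hm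
      linarith
    · intro m h
      have h3 : 0 ≤ ∑' n, e n * F (m + (n + 1)) :=
        tsum_nonneg fun n => mul_nonneg (he0 n) (h n).le
      have h4 := R2 m
      have h5 : 0 < (1 + w * r ^ m) * F m := by linarith
      exact (pos_iff_pos_of_mul_pos h5).1 (by linarith [hwm0 m])
  have hc1 := qc_pos q r h0 h1 hr hr1 1
  have mono : ∀ m, F m ≤ F (m + 1) := by
    refine down _ ?_ ?_
    · have hth : 0 < qc q r 1 * (1 - r) / (2 * M) :=
        div_pos (mul_pos hc1 (by linarith)) (by linarith)
      filter_upwards [hz.eventually_lt_const hth] with m hm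
      rw [x2 m, x2 (m + 1)]
      have h3 := tail 2 m
      have h4 := tail 2 (m + 1)
      have e3 : w * r ^ (m + 1) = (w * r ^ m) * r := by ring
      rw [e3] at h4 ⊢
      generalize (∑' k, qc q r (k + 2) * (-(w * r ^ m)) ^ k) = A at *
      generalize (∑' k, qc q r (k + 2) * (-(w * r ^ m * r)) ^ k) = B at *
      rw [lt_div_iff₀ (by linarith)] at hm
      have hv := hwm0 m
      generalize w * r ^ m = v at *
      have a1 := (abs_le.1 h3).2
      have b1 := (abs_le.1 h4).1
      have h6 : v * A ≤ v * M := mul_le_mul_of_nonneg_left a1 hv.le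
      have h7 : v * r ^ 2 * (-M) ≤ v * r ^ 2 * B := mul_le_mul_of_nonneg_left b1 (by positivity)
      have h8 : v * M * r ^ 2 ≤ v * M := mul_le_of_le_one_right (by positivity)
        (pow_le_one₀ hr0.le hr1.le)
      have h9 : 0 ≤ qc q r 1 * (1 - r) - v * A + v * r ^ 2 * B := by linarith
      have := mul_nonneg hv.le h9
      linarith
    · intro m h
      have h3 : ∑' n, e n * F (m + (n + 1)) ≤ ∑' n, e n * F (m + 1 + (n + 1)) :=
        (hsF m).tsum_le_tsum (fun n => mul_le_mul_of_nonneg_left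
          (by have := h n; rwa [show m + (n + 1) + 1 = m + 1 + (n + 1) by ring] at this) (he0 n))
          (hsF (m + 1))
      have h4 := R2 m
      have h5 := R2 (m + 1)
      have h6 : (1 + w * r ^ m) * F m ≤ (1 + w * r ^ (m + 1)) * F (m + 1) := by linarith
      have h7 : w * r ^ (m + 1) ≤ w * r ^ m := by
        rw [pow_succ, ← mul_assoc]; exact mul_le_of_le_one_right (hwm0 m).le hr1.le
      have h8 := mul_le_mul_of_nonneg_right h7 (pos (m + 1)).le
      have h9 : (1 + w * r ^ m) * F m ≤ (1 + w * r ^ m) * F (m + 1) := by linarith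
      exact le_of_mul_le_mul_left h9 (by linarith [hwm0 m])
  have mono0 : ∀ n, F 0 ≤ F n := fun n => monotone_nat_of_le_succ mono (Nat.zero_le n)
  have F0 : F 0 = qS q r w := by simp [hF]
  have hw' : |w| < 1 := by rwa [abs_of_pos hw0]
  have h := qconv q r r h0 h1 hr hr1 w hw'
  have hA := (qA_summable q r q h0 h1 hq).of_norm
  have hsA : Summable fun n => qA q r n * q ^ n * F n :=
    Summable.of_norm_bounded (hA.mul_right M) fun n => by
      have := mul_pos (qA_pos q r h0 h1 hr hr1 n) (pow_pos h0 n)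
      rw [norm_mul, Real.norm_eq_abs (qA q r n * q ^ n), abs_of_pos this]
      exact mul_le_mul_of_nonneg_left (hFM _) this.le
  have hlow : qc q r 1 * F 0 ≤ ∑' n, qA q r n * q ^ n * F n := by
    have : qc q r 1 = ∑' n, qA q r n * q ^ n := by
      rw [qc, pow_one, ← qbinom_s13 q r q h0 h1 hq, mul_div_assoc, div_self hP.ne', mul_one]
    rw [this, ← tsum_mul_right]
    exact (hA.mul_right _).tsum_le_tsum (fun n => mul_le_mul_of_nonneg_left (mono0 n)
      (mul_pos (qA_pos q r h0 h1 hr hr1 n) (pow_pos h0 n)).le) hsA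
  have hup : qS q r w = 1 - w * ∑' n, qA q r n * q ^ n * F n := by
    have h2 := qtail_step q r h0 h1 hr hr1 w hw' 0
    rw [qc_zero q r h0 h1] at h2
    simp only [hF]
    rw [h]
    refine Eq.trans h2 ?_
    congr 2
    refine tsum_congr fun k => ?_
    rw [qc, show r * (r ^ k * q) = r ^ (k + (0 + 1)) * q by ring]
  rw [F0] at hlow
  refine ⟨F0 ▸ pos 0, ?_⟩
  have := mul_le_mul_of_nonneg_left hlow hw0.le
  linarith

lemma qGamma_eq (q α : ℝ) (h0 : 0 < q) (h1 : q < 1) (k : ℕ) :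
    (qGamma q (α * k + 1))⁻¹ = qc q (q ^ α) k * ((1 - q) ^ α) ^ k := by
  have h2 : 0 < 1 - q := by linarith
  rw [qGamma, qc, Real.rpow_add h0, Real.rpow_mul h0.le, Real.rpow_one, Real.rpow_natCast,
    show 1 - (α * k + 1) = -(α * k) by ring, Real.rpow_neg h2.le, Real.rpow_mul h2.le,
    Real.rpow_natCast, mul_inv, inv_inv, inv_div]

theorem one_sub_qML_bounds (q α : ℝ) (hq0 : 0 < q) (hq1 : q < 1)
    (hα0 : 0 < α) (hα1 : α < 1) :
    ∀ z : ℝ, 0 < z → z < (1 - q) ^ (-α) →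
      ((qGamma q (α + 1))⁻¹ * z) / (1 + (qGamma q (α + 1))⁻¹ * z)
        ≤ 1 - qML q α 1 (-z) ∧ 1 - qML q α 1 (-z) < 1 := by
  intro z hz hz1
  have h2 : 0 < 1 - q := by linarith
  have hb : 0 < (1 - q) ^ α := Real.rpow_pos_of_pos h2 α
  have hr : q < q ^ α := by
    simpa using Real.rpow_lt_rpow_of_exponent_gt hq0 hq1 hα1
  have hr1 : q ^ α < 1 := Real.rpow_lt_one hq0.le hq1 hα0
  have hw : (1 - q) ^ α * z < 1 := by
    rw [Real.rpow_neg h2.le] at hz1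
    calc _ < (1 - q) ^ α * ((1 - q) ^ α)⁻¹ := mul_lt_mul_of_pos_left hz1 hb
      _ = 1 := mul_inv_cancel₀ hb.ne'
  have hM : qML q α 1 (-z) = qS q (q ^ α) ((1 - q) ^ α * z) := by
    rw [qML, qS]
    refine tsum_congr fun k => ?_
    rw [div_eq_mul_inv, qGamma_eq q α hq0 hq1 k, neg_mul_eq_mul_neg, mul_pow]
    ring
  have hG : (qGamma q (α + 1))⁻¹ * z = qc q (q ^ α) 1 * ((1 - q) ^ α * z) := by
    have := qGamma_eq q α hq0 hq1 1
    rw [Nat.cast_one, mul_one, pow_one] at this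
    rw [this]; ring
  obtain ⟨hp, hle⟩ := qS_main q (q ^ α) hq0 hq1 hr hr1 _ (mul_pos hb hz) hw
  rw [hM, hG]
  have hc := mul_pos (qc_pos q (q ^ α) hq0 hq1 hr hr1 1) (mul_pos hb hz)
  refine ⟨?_, by linarith⟩
  rw [div_le_iff₀ (by linarith)]
  linarith
end
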